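/- arXiv:1011.1930 — 5 statements merged into one kernel-verified Lean document; each statement's English description precedes it below -/
import Mathlib

section
/- Let λ be a pre-partition of length at most r, let k be an integer with 0 ≤ k ≤ r−1, and let A be an r × s matrix over ℂ⟦t⟧ equivalent to δ_λ. Then every (k+1) × (k+1) minor of A is zero if and only if λ_1 = λ_2 = ⋯ = λ_{r−k} = ∞. -/
/-!
The vanishing of all minors of a fixed size is invariant under equivalence: by multilinearity of
the determinant in the rows, a minor of `P * A` is a linear combination of determinants
`(A.submatrix φ g).det` with arbitrary row selections `φ` (`minors_mul_left`), and each of these is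
zero or, up to sign, an honest minor of `A` (`minors_of_strictMono`). Columns are handled by
transposition. It therefore suffices to treat `δ_λ` itself.

If `λ_1 = ⋯ = λ_{r-k} = ∞`, any choice of `k + 1` rows of `δ_λ` contains one of the first `r - k`,
which are zero. Conversely, the minor on the last `k + 1` rows and columns is
`t^{λ_{r-k}} ⋯ t^{λ_r}`; if it vanishes, some `λ_j` with `j ≥ r - k` is infinite, and monotonicity
gives `λ_i = ∞` for all `i ≤ r - k`.
-/

/-- `t^e` in `R⟦t⟧` for an extended natural number `e`, with the convention `t^∞ = 0`. -/
noncomputable def tpow (R : Type) [CommRing R] (e : ℕ∞) : PowerSeries R :=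
  if h : e = ⊤ then 0 else (PowerSeries.X : PowerSeries R) ^ (e.untop h)

/-- The matrix `δ_λ`: its `(i, s-r+i)` entry is `t^{λ_i}` and all other entries vanish. -/
noncomputable def deltaMat (R : Type) [CommRing R] (r s : ℕ) (lam : Fin r → ℕ∞) :
    Matrix (Fin r) (Fin s) (PowerSeries R) :=
  Matrix.of fun i j => if (j : ℕ) = s - r + (i : ℕ) then tpow R (lam i) else 0

/-- Two `r × s` matrices over a commutative ring are equivalent if `B = g A h`
for invertible `g`, `h`. -/
def MatEquiv {R : Type} [CommRing R] {r s : ℕ} (A B : Matrix (Fin r) (Fin s) R) : Prop :=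
  ∃ g : (Matrix (Fin r) (Fin r) R)ˣ, ∃ h : (Matrix (Fin s) (Fin s) R)ˣ,
    B = g.val * A * h.val

/-- If all minors with increasing row and column selections vanish, so do the determinants for
arbitrary selections, which are zero or differ from such a minor by a sign. -/
lemma minors_of_strictMono {R : Type} [CommRing R] {m n p : ℕ} (A : Matrix (Fin m) (Fin n) R)
    (hA : ∀ (f : Fin p → Fin m) (g : Fin p → Fin n),
      StrictMono f → StrictMono g → (A.submatrix f g).det = 0)
    (f : Fin p → Fin m) (g : Fin p → Fin n) : (A.submatrix f g).det = 0 := by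
  by_cases hf : Function.Injective f
  swap
  · obtain ⟨i, j, hij, hne⟩ : ∃ i j, f i = f j ∧ i ≠ j := by
      simpa [Function.Injective] using hf
    exact Matrix.det_zero_of_row_eq hne (by ext x; simp [hij])
  by_cases hg : Function.Injective g
  swap
  · obtain ⟨i, j, hij, hne⟩ : ∃ i j, g i = g j ∧ i ≠ j := by
      simpa [Function.Injective] using hg
    exact Matrix.det_zero_of_column_eq hne (by intro x; simp [hij])
  have h := hA (f ∘ Tuple.sort f) (g ∘ Tuple.sort g)
    ((Tuple.monotone_sort f).strictMono_of_injective (hf.comp (Tuple.sort f).injective))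
    ((Tuple.monotone_sort g).strictMono_of_injective (hg.comp (Tuple.sort g).injective))
  have e : A.submatrix (f ∘ Tuple.sort f) (g ∘ Tuple.sort g)
      = ((A.submatrix f g).submatrix (Tuple.sort f) id).submatrix id (Tuple.sort g) := rfl
  rw [e, Matrix.det_permute', Matrix.det_permute] at h
  have u (σ : Equiv.Perm (Fin p)) : IsUnit (((Equiv.Perm.sign σ : ℤˣ) : ℤ) : R) :=
    (Equiv.Perm.sign σ).isUnit.map (Int.castRingHom R)
  rwa [(u _).mul_right_eq_zero, (u _).mul_right_eq_zero] at h

lemma minors_mul_left {R : Type} [CommRing R] {l m n p : ℕ} (P : Matrix (Fin l) (Fin m) R)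
    (A : Matrix (Fin m) (Fin n) R)
    (hA : ∀ (f : Fin p → Fin m) (g : Fin p → Fin n), (A.submatrix f g).det = 0)
    (f : Fin p → Fin l) (g : Fin p → Fin n) : ((P * A).submatrix f g).det = 0 := by
  have e : (P * A).submatrix f g
      = fun i => ∑ j : Fin m, P (f i) j • (fun x => A j (g x) : Fin p → R) := by
    ext i x
    simp [Matrix.mul_apply, Finset.sum_apply]
  rw [e]
  change Matrix.detRowAlternating.toMultilinearMap _ = 0
  rw [MultilinearMap.map_sum]
  refine Finset.sum_eq_zero fun φ _ => ?_
  rw [MultilinearMap.map_smul_univ]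
  have h : Matrix.detRowAlternating.toMultilinearMap
      (fun i => (fun x => A (φ i) (g x) : Fin p → R)) = 0 := hA φ g
  rw [h, smul_zero]

lemma minors_mul_right {R : Type} [CommRing R] {l m n p : ℕ} (A : Matrix (Fin l) (Fin m) R)
    (Q : Matrix (Fin m) (Fin n) R)
    (hA : ∀ (f : Fin p → Fin l) (g : Fin p → Fin m), (A.submatrix f g).det = 0)
    (f : Fin p → Fin l) (g : Fin p → Fin n) : ((A * Q).submatrix f g).det = 0 := by
  rw [← Matrix.det_transpose, Matrix.transpose_submatrix, Matrix.transpose_mul]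
  refine minors_mul_left _ _ (fun f' g' => ?_) g f
  rw [← Matrix.transpose_submatrix, Matrix.det_transpose]
  exact hA g' f'

lemma minors_iff_of_matEquiv {R : Type} [CommRing R] {r s p : ℕ}
    {A B : Matrix (Fin r) (Fin s) R} (h : MatEquiv A B) :
    (∀ (f : Fin p → Fin r) (g : Fin p → Fin s), (A.submatrix f g).det = 0) ↔
      ∀ (f : Fin p → Fin r) (g : Fin p → Fin s), (B.submatrix f g).det = 0 := by
  obtain ⟨P, Q, rfl⟩ := h
  refine ⟨fun hA => minors_mul_right _ _ (minors_mul_left _ _ hA), fun hB => ?_⟩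
  have e : A = (P⁻¹).val * (P.val * A * Q.val) * (Q⁻¹).val := by
    rw [Matrix.mul_assoc P.val, ← Matrix.mul_assoc (P⁻¹).val, Units.inv_mul, Matrix.one_mul,
      Matrix.mul_assoc, Units.mul_inv, Matrix.mul_one]
  rw [e]
  exact minors_mul_right _ _ (minors_mul_left _ _ hB)

lemma tpow_eq_zero_iff (e : ℕ∞) : tpow ℂ e = 0 ↔ e = ⊤ := by
  unfold tpow
  split_ifs with h
  · simp [h]
  · simp [h, PowerSeries.X_ne_zero]

/-- For `A` equivalent to `δ_λ`, all `(k+1) × (k+1)` minors of `A` vanish if and only if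
`λ_1 = ⋯ = λ_{r-k} = ∞`. -/
theorem stmt1 (r s k : ℕ) (hr : 1 ≤ r) (hrs : r ≤ s) (hk : k ≤ r - 1)
    (lam : Fin r → ℕ∞) (hlam : Antitone lam)
    (A : Matrix (Fin r) (Fin s) (PowerSeries ℂ))
    (hA : MatEquiv A (deltaMat ℂ r s lam)) :
    (∀ (f : Fin (k + 1) → Fin r) (g : Fin (k + 1) → Fin s),
        StrictMono f → StrictMono g → (A.submatrix f g).det = 0)
      ↔ ∀ i : Fin r, (i : ℕ) < r - k → lam i = ⊤ := by
  constructor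
  · intro h i hi
    have hB := (minors_iff_of_matEquiv hA).1 (minors_of_strictMono A h)
    -- The minor of `δ_λ` on the last `k + 1` rows and columns is diagonal.
    have hd := hB (fun j => ⟨r - (k + 1) + j, by omega⟩) (fun j => ⟨s - (k + 1) + j, by omega⟩)
    have e : (deltaMat ℂ r s lam).submatrix
        (fun j : Fin (k + 1) => (⟨r - (k + 1) + j, by omega⟩ : Fin r))
        (fun j : Fin (k + 1) => (⟨s - (k + 1) + j, by omega⟩ : Fin s))
        = Matrix.diagonal fun j : Fin (k + 1) =>
            tpow ℂ (lam ⟨r - (k + 1) + j, by omega⟩) := by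
      ext1 a b
      simp only [deltaMat, Matrix.submatrix_apply, Matrix.of_apply, Matrix.diagonal_apply]
      refine if_congr ?_ rfl rfl
      rw [Fin.ext_iff]
      omega
    rw [e, Matrix.det_diagonal, Finset.prod_eq_zero_iff] at hd
    obtain ⟨j, -, hj⟩ := hd
    rw [tpow_eq_zero_iff] at hj
    rw [← top_le_iff, ← hj]
    apply hlam
    rw [Fin.le_def]
    change (i : ℕ) ≤ r - (k + 1) + j
    omega
  · intro h f g _ _
    refine (minors_iff_of_matEquiv hA).2 (minors_of_strictMono _ fun f g hf _ => ?_) f g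
    -- The `k + 1` increasing row indices start below `r - k`, so the first selected row is zero.
    have h0 : (f 0 : ℕ) < r - k := by
      have key : ∀ j : ℕ, ∀ hj : j < k + 1, (f 0 : ℕ) + j ≤ f ⟨j, hj⟩ := by
        intro j
        induction j with
        | zero => intro _; exact le_rfl
        | succ j ih =>
          intro hj
          have h1 := ih (by omega)
          have h2 : f ⟨j, by omega⟩ < f ⟨j + 1, hj⟩ := hf (Fin.mk_lt_mk.2 (Nat.lt_succ_self j))
          rw [Fin.lt_def] at h2
          omega
      have h1 := key k (Nat.lt_succ_self k)
      have h2 := (f ⟨k, Nat.lt_succ_self k⟩).isLt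
      omega
    refine Matrix.det_eq_zero_of_row_eq_zero 0 fun j => ?_
    simp [deltaMat, h _ h0, (tpow_eq_zero_iff ⊤).2 rfl]
end

section
/- Fix n ∈ ℕ and let π_n : ℂ⟦t⟧ → R_n = ℂ[X]/(X^{n+1}) be the ℂ-algebra homomorphism sending t to X, applied entrywise to matrices. Let λ be a pre-partition of length at most r and set λ̄_i = min(λ_i, n+1) for each i. Then: (a) the image under π_n of the set of r × s matrices over ℂ⟦t⟧ equivalent to δ_λ equals the set of r × s matrices over R_n equivalent to δ_{λ̄}^{(n)}; and (b) for a nonincreasing sequence μ with entries in {0, …, n+1}, the preimage under π_n of the set of matrices over R_n equivalent to δ_μ^{(n)} equals the union, over all pre-partitions λ of length at most r satisfying min(λ_i, n+1) = μ_i for all i, of the sets of matrices over ℂ⟦t⟧ equivalent to δ_λ. -/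
/-- The ring `R_n = ℂ[X]/(X^{n+1})`. -/
abbrev Rn (n : ℕ) : Type :=
  Polynomial ℂ ⧸ Ideal.span {(Polynomial.X : Polynomial ℂ) ^ (n + 1)}

/-- The matrix `δ_λ^{(n)}` over `R_n`. -/
noncomputable def deltaN (r s n : ℕ) (lam : Fin r → ℕ) :
    Matrix (Fin r) (Fin s) (Rn n) :=
  Matrix.of fun i j => if (j : ℕ) = s - r + (i : ℕ)
    then (Ideal.Quotient.mk _ (Polynomial.X : Polynomial ℂ) : Rn n) ^ (lam i) else 0

/-- The ℂ-algebra homomorphism `π_n : ℂ⟦t⟧ → R_n` sending `t` to `X` (truncation of the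
power series modulo `t^{n+1}`). -/
noncomputable def piN (n : ℕ) (f : PowerSeries ℂ) : Rn n :=
  Ideal.Quotient.mk _ (PowerSeries.trunc (n + 1) f)

/-- The truncation `λ̄_i = min(λ_i, n+1)` of a pre-partition. -/
noncomputable def truncSeq (n : ℕ) {r : ℕ} (lam : Fin r → ℕ∞) : Fin r → ℕ :=
  fun i => (min (lam i) ((n + 1 : ℕ) : ℕ∞)).toNat

open Matrix

/-! ### Equivalence of matrices -/

/-- Criterion for `MatEquiv` that allows computing after an arbitrary reindexing of the rows and
columns of either matrix; with `E ≠ F` it also absorbs row and column permutations. -/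
lemma matEquiv_of_submatrix {R : Type} [CommRing R] {r s : ℕ} {m k : Type}
    [Fintype m] [DecidableEq m] [Fintype k] [DecidableEq k]
    {A B : Matrix (Fin r) (Fin s) R} (E₁ F₁ : m ≃ Fin r) (E₂ F₂ : k ≃ Fin s)
    {g : Matrix m m R} {h : Matrix k k R} (hg : IsUnit g) (hh : IsUnit h)
    (H : B.submatrix F₁ F₂ = g * A.submatrix E₁ E₂ * h) : MatEquiv A B := by
  obtain ⟨g, rfl⟩ := hg
  obtain ⟨h, rfl⟩ := hh
  refine ⟨⟨g.val.submatrix F₁.symm E₁.symm, g.inv.submatrix E₁.symm F₁.symm, ?_, ?_⟩,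
    ⟨h.val.submatrix E₂.symm F₂.symm, h.inv.submatrix F₂.symm E₂.symm, ?_, ?_⟩, ?_⟩
  · rw [submatrix_mul_equiv, g.val_inv, submatrix_one_equiv]
  · rw [submatrix_mul_equiv, g.inv_val, submatrix_one_equiv]
  · rw [submatrix_mul_equiv, h.val_inv, submatrix_one_equiv]
  · rw [submatrix_mul_equiv, h.inv_val, submatrix_one_equiv]
  · have hA : A = (A.submatrix E₁ E₂).submatrix E₁.symm E₂.symm := by simp
    have hB : B = (B.submatrix F₁ F₂).submatrix F₁.symm F₂.symm := by simp
    rw [hB, H]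
    conv_rhs => rw [hA]
    simp only [submatrix_mul_equiv]

lemma MatEquiv.symm {R : Type} [CommRing R] {r s : ℕ} {A B : Matrix (Fin r) (Fin s) R}
    (H : MatEquiv A B) : MatEquiv B A := by
  obtain ⟨g, h, rfl⟩ := H
  exact ⟨g⁻¹, h⁻¹, by simp [Matrix.mul_assoc]⟩

lemma MatEquiv.trans {R : Type} [CommRing R] {r s : ℕ} {A B C : Matrix (Fin r) (Fin s) R}
    (H : MatEquiv A B) (H' : MatEquiv B C) : MatEquiv A C := by
  obtain ⟨g, h, rfl⟩ := H
  obtain ⟨g', h', rfl⟩ := H'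
  exact ⟨g' * g, h * h', by simp [Matrix.mul_assoc]⟩

lemma MatEquiv.map {R S : Type} [CommRing R] [CommRing S] (f : R →+* S) {r s : ℕ}
    {A B : Matrix (Fin r) (Fin s) R} (H : MatEquiv A B) : MatEquiv (A.map f) (B.map f) := by
  obtain ⟨g, h, rfl⟩ := H
  exact ⟨Units.map f.mapMatrix.toMonoidHom g, Units.map f.mapMatrix.toMonoidHom h, by
    simp [Matrix.map_mul]⟩

/-! ### Powers of `t` with exponent in `ℕ∞` -/

lemma tpow_top : tpow ℂ ⊤ = 0 := by simp [tpow]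

lemma tpow_coe (e : ℕ) : tpow ℂ (e : ℕ∞) = PowerSeries.X ^ e := by
  have h : (e : ℕ∞) ≠ ⊤ := ENat.natCast_ne_top e
  rw [tpow, dif_neg h]
  rfl

lemma tpow_dvd_iff (e : ℕ∞) (f : PowerSeries ℂ) : tpow ℂ e ∣ f ↔ e ≤ f.order := by
  induction e using ENat.recTopCoe with
  | top => rw [tpow_top, zero_dvd_iff, top_le_iff, PowerSeries.order_eq_top]
  | coe e =>
    rw [tpow_coe, PowerSeries.X_pow_dvd_iff]
    exact ⟨PowerSeries.nat_le_order f e, fun h d hd =>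
      PowerSeries.coeff_of_lt_order d (lt_of_lt_of_le (by exact_mod_cast hd) h)⟩

lemma order_tpow (e : ℕ∞) : (tpow ℂ e).order = e := by
  induction e using ENat.recTopCoe with
  | top => rw [tpow_top, PowerSeries.order_zero]
  | coe e => rw [tpow_coe, PowerSeries.order_X_pow]

lemma exists_unit_mul_tpow (f : PowerSeries ℂ) :
    ∃ u : PowerSeries ℂ, IsUnit u ∧ f = tpow ℂ f.order * u := by
  by_cases hf : f = 0
  · subst hf
    exact ⟨1, isUnit_one, by simp [tpow_top]⟩
  · obtain ⟨u, hu⟩ := (tpow_dvd_iff f.order f).2 le_rfl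
    refine ⟨u, ?_, hu⟩
    have h1 : f.order = f.order + u.order := by
      conv_lhs => rw [hu]
      rw [PowerSeries.order_mul, order_tpow]
    have h2 : u.order = 0 := by
      have h3 : f.order ≠ ⊤ := by rwa [Ne, PowerSeries.order_eq_top]
      exact ENat.add_right_injective_of_ne_top h3 (by simpa using h1.symm)
    rw [PowerSeries.isUnit_iff_constantCoeff, isUnit_iff_ne_zero]
    intro h0
    have := PowerSeries.X_dvd_iff.2 h0
    rw [← pow_one PowerSeries.X, ← tpow_coe, tpow_dvd_iff, h2] at this
    simp at this

/-! ### Smith normal form over `ℂ⟦t⟧` -/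

/-- Smith normal form, by induction on the number of rows. The pivot is an entry of minimal order,
so it divides everything and yields the smallest exponent, placed last. The case `A = 0` needs no
special treatment: the pivot is then `t^∞ = 0`. -/
theorem exists_smith (r s : ℕ) (hrs : r ≤ s) (A : Matrix (Fin r) (Fin s) (PowerSeries ℂ)) :
    ∃ lam : Fin r → ℕ∞, Antitone lam ∧ MatEquiv A (deltaMat ℂ r s lam) := by
  induction r generalizing s with
  | zero => exact ⟨fun _ => 0, fun _ _ _ => le_rfl, 1, 1, by ext i; exact i.elim0⟩
  | succ r ih =>
    obtain ⟨s, rfl⟩ : ∃ s', s = s' + 1 := ⟨s - 1, by omega⟩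
    obtain ⟨p, hp⟩ := Finite.exists_min fun p : Fin (r + 1) × Fin (s + 1) => (A p.1 p.2).order
    set e := (A p.1 p.2).order with he
    set T := tpow ℂ e with hT
    let F₁ : Fin r ⊕ Fin 1 ≃ Fin (r + 1) := finSumFinEquiv
    let F₂ : Fin s ⊕ Fin 1 ≃ Fin (s + 1) := finSumFinEquiv
    let E₁ := F₁.trans (Equiv.swap (F₁ (Sum.inr 0)) p.1)
    let E₂ := F₂.trans (Equiv.swap (F₂ (Sum.inr 0)) p.2)
    obtain ⟨u, hu, hau⟩ := exists_unit_mul_tpow (A p.1 p.2)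
    -- Quotients by the pivot, chosen so that the corner quotient is a unit even if the pivot is 0.
    have hq : ∀ i j, ∃ q, A.submatrix E₁ E₂ i j = T * q ∧
        (i = Sum.inr 0 → j = Sum.inr 0 → q = u) := by
      intro i j
      by_cases hij : i = Sum.inr 0 ∧ j = Sum.inr 0
      · obtain ⟨rfl, rfl⟩ := hij
        exact ⟨u, by simpa [E₁, E₂] using hau, fun _ _ => rfl⟩
      · obtain ⟨q, hq⟩ := (tpow_dvd_iff e (A.submatrix E₁ E₂ i j)).2 (hp (E₁ i, E₂ j))
        exact ⟨q, hq, fun h1 h2 => absurd ⟨h1, h2⟩ hij⟩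
    choose Q hQ hQu using hq
    let M : Matrix (Fin r ⊕ Fin 1) (Fin s ⊕ Fin 1) (PowerSeries ℂ) := Matrix.of Q
    let D := M.toBlocks₂₂
    have hAM : A.submatrix E₁ E₂ = T • M := by
      ext1 i j
      exact hQ i j
    have hD : IsUnit D := by
      rw [isUnit_iff_isUnit_det, det_fin_one]
      have : D 0 0 = u := hQu _ _ rfl rfl
      rwa [this]
    let _ : Invertible D := hD.invertible
    let S := M.toBlocks₁₁ - M.toBlocks₁₂ * ⅟D * M.toBlocks₂₁
    let L : Matrix (Fin r ⊕ Fin 1) (Fin r ⊕ Fin 1) (PowerSeries ℂ) :=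
      fromBlocks 1 (M.toBlocks₁₂ * ⅟D) 0 1
    let U : Matrix (Fin s ⊕ Fin 1) (Fin s ⊕ Fin 1) (PowerSeries ℂ) :=
      fromBlocks 1 0 (⅟D * M.toBlocks₂₁) 1
    have hM : M = L * fromBlocks S 0 0 D * U := by
      conv_lhs => rw [← fromBlocks_toBlocks M]
      exact fromBlocks_eq_of_invertible₂₂ _ _ _ _
    obtain ⟨lam, hlam, g, h, hgh⟩ := ih s (by omega) (T • S)
    have hle : ∀ i, e ≤ lam i := by
      intro i
      have h1 : deltaMat ℂ r s lam i ⟨s - r + i, by omega⟩ = tpow ℂ (lam i) := by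
        simp [deltaMat]
      have h2 : T ∣ tpow ℂ (lam i) := by
        rw [← h1, hgh]
        simp
      rwa [hT, tpow_dvd_iff, order_tpow] at h2
    refine ⟨Fin.snoc lam e, ?_, ?_⟩
    · intro i j hij
      induction j using Fin.lastCases with
      | last =>
        induction i using Fin.lastCases with
        | last => exact le_rfl
        | cast i => simpa using hle i
      | cast j =>
        induction i using Fin.lastCases with
        | last => exact absurd hij (by simp)
        | cast i => simpa using hlam (by simpa using hij)
    have hA' : L * fromBlocks (T • S) 0 0 (T • D) * U = A.submatrix E₁ E₂ := by
      rw [hAM]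
      conv_rhs => rw [hM]
      have : fromBlocks (T • S) 0 0 (T • D) = T • fromBlocks S 0 0 D := by
        rw [fromBlocks_smul]; simp
      rw [this]
      simp
    have hB : (deltaMat ℂ (r + 1) (s + 1) (Fin.snoc lam e)).submatrix F₁ F₂ =
        fromBlocks (deltaMat ℂ r s lam) 0 0 (T • 1) := by
      have hsr : s + 1 - (r + 1) = s - r := by omega
      ext1 i j
      rcases i with i | i <;> rcases j with j | j
      · have : F₁ (Sum.inl i) = Fin.castSucc i := rfl
        simp [deltaMat, F₂, this, hsr]
      · have : F₁ (Sum.inl i) = Fin.castSucc i := rfl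
        have h2 : s ≠ s - r + (i : ℕ) := by omega
        simp [deltaMat, F₂, this, hsr, h2]
      · have h2 : (j : ℕ) ≠ s - r + r := by omega
        simp [deltaMat, F₁, F₂, hsr, h2]
      · have h3 : i = 0 := Subsingleton.elim _ _
        have h4 : j = 0 := Subsingleton.elim _ _
        subst h3 h4
        have : F₁ (Sum.inr 0) = Fin.last r := rfl
        have h2 : s = s - r + r := by omega
        simp [deltaMat, F₂, this, hsr, ← h2, hT]
    refine matEquiv_of_submatrix E₁ F₁ E₂ F₂
      (g := fromBlocks g.val 0 0 1 * fromBlocks 1 (-(M.toBlocks₁₂ * ⅟D)) 0 1)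
      (h := fromBlocks 1 0 (-(⅟D * M.toBlocks₂₁)) 1 * fromBlocks h.val 0 0 (⅟D)) ?_ ?_ ?_
    · refine IsUnit.mul ?_ ?_
      · rw [isUnit_iff_isUnit_det, det_fromBlocks_zero₂₁, det_one, mul_one,
          ← isUnit_iff_isUnit_det]
        exact g.isUnit
      · rw [isUnit_iff_isUnit_det, det_fromBlocks_zero₂₁]
        simp
    · refine IsUnit.mul ?_ ?_
      · rw [isUnit_iff_isUnit_det, det_fromBlocks_zero₁₂]
        simp
      · rw [isUnit_iff_isUnit_det, det_fromBlocks_zero₂₁]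
        exact ((isUnit_iff_isUnit_det _).1 h.isUnit).mul
          ((isUnit_iff_isUnit_det _).1 (isUnit_of_invertible _))
    · have hL : fromBlocks 1 (-(M.toBlocks₁₂ * ⅟D)) 0 1 * L = 1 := by
        simp only [L, fromBlocks_multiply, Matrix.mul_one, Matrix.one_mul, Matrix.mul_zero,
          Matrix.zero_mul, add_zero, zero_add, add_neg_cancel, fromBlocks_one]
      have hU : U * fromBlocks 1 0 (-(⅟D * M.toBlocks₂₁)) 1 = 1 := by
        simp only [U, fromBlocks_multiply, Matrix.mul_one, Matrix.one_mul, Matrix.mul_zero,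
          Matrix.zero_mul, add_zero, zero_add, add_neg_cancel, fromBlocks_one]
      have hmid : fromBlocks (deltaMat ℂ r s lam) 0 0 (T • 1) =
          fromBlocks g.val 0 0 (1 : Matrix (Fin 1) (Fin 1) (PowerSeries ℂ)) *
            fromBlocks (T • S) 0 0 (T • D) * fromBlocks h.val 0 0 (⅟D) := by
        simp only [fromBlocks_multiply, Matrix.one_mul, Matrix.mul_zero, Matrix.zero_mul,
          add_zero, zero_add, hgh, Matrix.smul_mul, mul_invOf_self]
      rw [hB, ← hA', hmid]
      simp only [Matrix.mul_assoc]
      rw [← Matrix.mul_assoc U, hU, Matrix.one_mul, ← Matrix.mul_assoc _ L, hL, Matrix.one_mul]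

/-! ### The truncation map -/

lemma piN_eq_zero_iff (n : ℕ) (f : PowerSeries ℂ) :
    piN n f = 0 ↔ (PowerSeries.X : PowerSeries ℂ) ^ (n + 1) ∣ f := by
  rw [piN, Ideal.Quotient.eq_zero_iff_mem, Ideal.mem_span_singleton, Polynomial.X_pow_dvd_iff,
    PowerSeries.X_pow_dvd_iff]
  refine forall₂_congr fun d hd => ?_
  rw [PowerSeries.coeff_trunc, if_pos hd]

/-- `π_n` as a bundled ring homomorphism. -/
noncomputable def piHom (n : ℕ) : PowerSeries ℂ →+* Rn n where
  toFun := piN n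
  map_one' := by
    rw [piN, PowerSeries.trunc_one, map_one]
  map_zero' := by simp [piN]
  map_add' f g := by simp [piN]
  map_mul' f g := by
    rw [piN, piN, piN, ← map_mul, Ideal.Quotient.eq, Ideal.mem_span_singleton,
      Polynomial.X_pow_dvd_iff]
    intro d hd
    rw [Polynomial.coeff_sub, PowerSeries.coeff_trunc, if_pos hd,
      PowerSeries.coeff_mul_eq_coeff_trunc_mul_trunc f g hd, ← Polynomial.coe_mul,
      Polynomial.coeff_coe, sub_self]

lemma piHom_coe (n : ℕ) (p : Polynomial ℂ) :
    piHom n (p : PowerSeries ℂ) = Ideal.Quotient.mk _ p := by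
  change piN n p = _
  rw [piN, Ideal.Quotient.eq, Ideal.mem_span_singleton, Polynomial.X_pow_dvd_iff]
  intro d hd
  rw [Polynomial.coeff_sub, PowerSeries.coeff_trunc, if_pos hd, Polynomial.coeff_coe, sub_self]

lemma piHom_surjective (n : ℕ) : Function.Surjective (piHom n) := by
  intro x
  obtain ⟨p, rfl⟩ := Ideal.Quotient.mk_surjective x
  exact ⟨p, piHom_coe n p⟩

lemma piHom_eq_iff (n : ℕ) (f g : PowerSeries ℂ) :
    piHom n f = piHom n g ↔ (PowerSeries.X : PowerSeries ℂ) ^ (n + 1) ∣ f - g := by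
  rw [← sub_eq_zero, ← map_sub]
  exact piN_eq_zero_iff n _

lemma isUnit_of_piHom (n : ℕ) (f : PowerSeries ℂ) (hf : IsUnit (piHom n f)) : IsUnit f := by
  obtain ⟨y, hy⟩ := hf.exists_right_inv
  obtain ⟨g, rfl⟩ := piHom_surjective n y
  rw [← map_mul, ← map_one (piHom n), piHom_eq_iff] at hy
  have h1 := PowerSeries.X_dvd_iff.1 ((dvd_pow_self _ (Nat.succ_ne_zero n)).trans hy)
  rw [map_sub, map_mul, map_one, sub_eq_zero] at h1
  exact PowerSeries.isUnit_iff_constantCoeff.2 (IsUnit.of_mul_eq_one _ h1)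

/-- Any entrywise lift of an invertible matrix is invertible, because a power series is a unit as
soon as its image in `R_n` is; this is applied to the determinant. -/
lemma exists_lift_unit (n k : ℕ) (G : (Matrix (Fin k) (Fin k) (Rn n))ˣ) :
    ∃ g : (Matrix (Fin k) (Fin k) (PowerSeries ℂ))ˣ, g.val.map (piHom n) = G.val := by
  choose q hq using piHom_surjective n
  let g : Matrix (Fin k) (Fin k) (PowerSeries ℂ) := G.val.map q
  have hg : g.map (piHom n) = G.val := by
    ext1 i j
    exact hq _
  have hu : IsUnit g := by
    rw [isUnit_iff_isUnit_det]
    refine isUnit_of_piHom n _ ?_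
    rw [RingHom.map_det, RingHom.mapMatrix_apply, hg, ← isUnit_iff_isUnit_det]
    exact G.isUnit
  exact ⟨hu.unit, hg⟩

lemma piHom_tpow (n : ℕ) (e : ℕ∞) :
    piHom n (tpow ℂ e) = (Ideal.Quotient.mk _ (Polynomial.X : Polynomial ℂ) : Rn n) ^
      (min e ((n + 1 : ℕ) : ℕ∞)).toNat := by
  have hX : ∀ k : ℕ, (Ideal.Quotient.mk _ (Polynomial.X : Polynomial ℂ) : Rn n) ^ k =
      piHom n (PowerSeries.X ^ k) := by
    intro k
    rw [map_pow, ← Polynomial.coe_X, piHom_coe]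
  rw [hX]
  induction e using ENat.recTopCoe with
  | top =>
    rw [tpow_top, min_eq_right le_top, ENat.toNat_natCast, eq_comm, piHom_eq_iff, sub_zero]
  | coe e =>
    rw [tpow_coe, ← Nat.mono_cast.map_min, ENat.toNat_natCast]
    rcases le_total e (n + 1) with h | h
    · rw [min_eq_left h]
    · rw [min_eq_right h, piHom_eq_iff]
      exact dvd_sub (pow_dvd_pow _ h) dvd_rfl

lemma deltaMat_map (r s n : ℕ) (lam : Fin r → ℕ∞) :
    (deltaMat ℂ r s lam).map (piHom n) = deltaN r s n (truncSeq n lam) := by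
  ext1 i j
  simp only [deltaMat, deltaN, truncSeq, Matrix.map_apply, Matrix.of_apply]
  split_ifs
  · exact piHom_tpow n _
  · exact map_zero _

/-! ### Uniqueness of the normal form over `R_n` -/

/-- An oversized zero block (rows `≤ p`, columns `≥ p`) makes the determinant vanish: by
pigeonhole every term of the Leibniz expansion meets the block. -/
lemma det_eq_zero_of_block {r : ℕ} (M : Matrix (Fin r) (Fin r) ℂ) (p : Fin r)
    (hM : ∀ i j, i ≤ p → p ≤ j → M i j = 0) : M.det = 0 := by
  rw [det_apply]
  refine Finset.sum_eq_zero fun σ _ => ?_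
  obtain ⟨j, hj, hσ⟩ : ∃ j, p ≤ j ∧ σ j ≤ p := by
    by_contra! H
    have := Finset.card_le_card_of_injOn σ (s := Finset.Ici p) (t := Finset.Ioi p)
      (fun j hj => by simpa using H j (by simpa using hj)) σ.injective.injOn
    simp only [Fin.card_Ici, Fin.card_Ioi] at this
    omega
  have h0 : ∏ i, M (σ i) i = 0 := Finset.prod_eq_zero (Finset.mem_univ j) (hM _ _ hσ hj)
  rw [h0, smul_zero]

/-- One half of uniqueness: equivalence over `R_n` forces `ν ≤ μ`, since `μ_p < ν_p` would give an
invertible matrix an oversized zero block modulo the maximal ideal. -/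
lemma deltaN_le {r s n : ℕ} (hrs : r ≤ s) {mu nu : Fin r → ℕ} (hmu : Antitone mu)
    (hnu : Antitone nu) (hn : ∀ i, nu i ≤ n + 1)
    (H : MatEquiv (deltaN r s n mu) (deltaN r s n nu)) (p : Fin r) : nu p ≤ mu p := by
  by_contra! hp
  obtain ⟨G, K, hGK⟩ := H
  obtain ⟨g, hg⟩ := exists_lift_unit n r G
  obtain ⟨h, hh⟩ := exists_lift_unit n s K⁻¹
  have hX : ∀ k : ℕ, (Ideal.Quotient.mk _ (Polynomial.X : Polynomial ℂ) : Rn n) ^ k =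
      piHom n (PowerSeries.X ^ k) := by
    intro k
    rw [map_pow, ← Polynomial.coe_X, piHom_coe]
  have h1 : G.val * deltaN r s n mu = deltaN r s n nu * (K⁻¹).val := by
    rw [hGK, Matrix.mul_assoc, Units.mul_inv, Matrix.mul_one]
  let c : Fin r → Fin s := fun i => ⟨s - r + i, by omega⟩
  have hδ : ∀ (m : Fin r → ℕ) i j, deltaN r s n m i j =
      if j = c i then piHom n (PowerSeries.X ^ m i) else 0 := by
    intro m i j
    simp only [deltaN, Matrix.of_apply, hX, c, Fin.ext_iff]
  have hc : ∀ i j, c i = c j ↔ i = j := by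
    intro i j
    simp [c, Fin.ext_iff]
  have hent : ∀ i j, piHom n (g.val i j * PowerSeries.X ^ mu j) =
      piHom n (PowerSeries.X ^ nu i * h.val (c i) (c j)) := by
    intro i j
    have h2 := congrFun (congrFun h1 i) (c j)
    simp only [Matrix.mul_apply, hδ, hc, ← hg, ← hh, Matrix.map_apply] at h2
    simpa using h2
  have hdvd : ∀ i j, mu j < nu i → PowerSeries.constantCoeff (g.val i j) = 0 := by
    intro i j hij
    have h2 := (piHom_eq_iff _ _ _).1 (hent i j)
    have h3 : (PowerSeries.X : PowerSeries ℂ) ^ (mu j + 1) ∣ g.val i j * PowerSeries.X ^ mu j :=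
      (dvd_sub_left (dvd_mul_of_dvd_left (pow_dvd_pow _ hij) _)).1
        ((pow_dvd_pow _ (hij.trans_le (hn i))).trans h2)
    rw [pow_succ', mul_dvd_mul_iff_right (pow_ne_zero _ PowerSeries.X_ne_zero)] at h3
    exact PowerSeries.X_dvd_iff.1 h3
  have hdet : (g.val.map (PowerSeries.constantCoeff (R := ℂ))).det = 0 :=
    det_eq_zero_of_block _ p fun i j hi hj =>
      hdvd i j ((hmu hj).trans_lt (hp.trans_le (hnu hi)))
  rw [← RingHom.mapMatrix_apply, ← RingHom.map_det] at hdet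
  have := ((isUnit_iff_isUnit_det _).1 g.isUnit).map (PowerSeries.constantCoeff (R := ℂ))
  rw [hdet] at this
  exact not_isUnit_zero this

lemma deltaN_unique {r s n : ℕ} (hrs : r ≤ s) {mu nu : Fin r → ℕ} (hmu : Antitone mu)
    (hnu : Antitone nu) (hm : ∀ i, mu i ≤ n + 1) (hn : ∀ i, nu i ≤ n + 1)
    (H : MatEquiv (deltaN r s n mu) (deltaN r s n nu)) : mu = nu :=
  funext fun p => le_antisymm (deltaN_le hrs hnu hmu hm H.symm p) (deltaN_le hrs hmu hnu hn H p)

lemma truncSeq_le (n : ℕ) {r : ℕ} (lam : Fin r → ℕ∞) (i : Fin r) : truncSeq n lam i ≤ n + 1 :=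
  ENat.toNat_le_of_le_natCast (min_le_right _ _)

lemma truncSeq_antitone (n : ℕ) {r : ℕ} {lam : Fin r → ℕ∞} (h : Antitone lam) :
    Antitone (truncSeq n lam) := fun _ _ hij =>
  ENat.toNat_le_toNat (min_le_min_right _ (h hij))
    (ne_top_of_le_ne_top (ENat.natCast_ne_top (n + 1)) (min_le_right _ _))

/-- (a) The image under `π_n` (applied entrywise) of the equivalence class of `δ_λ` over
`ℂ⟦t⟧` is the equivalence class of `δ_{λ̄}^{(n)}` over `R_n`, where `λ̄_i = min(λ_i, n+1)`;
(b) the preimage under `π_n` of the equivalence class of `δ_μ^{(n)}` is the union of the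
equivalence classes of `δ_λ` over all pre-partitions `λ` truncating to `μ`. -/
theorem stmt5 (r s n : ℕ) (hr : 1 ≤ r) (hrs : r ≤ s) :
    (∀ (lam : Fin r → ℕ∞), Antitone lam →
      (fun A : Matrix (Fin r) (Fin s) (PowerSeries ℂ) => A.map (piN n)) ''
          {A | MatEquiv A (deltaMat ℂ r s lam)}
        = {B | MatEquiv B (deltaN r s n (truncSeq n lam))}) ∧
    (∀ (mu : Fin r → ℕ), Antitone mu → (∀ i, mu i ≤ n + 1) →
      (fun A : Matrix (Fin r) (Fin s) (PowerSeries ℂ) => A.map (piN n)) ⁻¹'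
          {B | MatEquiv B (deltaN r s n mu)}
        = ⋃ lam ∈ {l : Fin r → ℕ∞ | Antitone l ∧ truncSeq n l = mu},
            {A | MatEquiv A (deltaMat ℂ r s lam)}) := by
  have hmap : ∀ (A : Matrix (Fin r) (Fin s) (PowerSeries ℂ)) (lam : Fin r → ℕ∞),
      MatEquiv A (deltaMat ℂ r s lam) →
        MatEquiv (A.map (piHom n)) (deltaN r s n (truncSeq n lam)) := by
    intro A lam H
    rw [← deltaMat_map]
    exact H.map (piHom n)
  refine ⟨fun lam _ => Set.Subset.antisymm ?_ ?_, fun mu hmu hm => Set.Subset.antisymm ?_ ?_⟩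
  · rintro _ ⟨A, hA, rfl⟩
    exact hmap A lam hA
  · intro B hB
    obtain ⟨G, K, hGK⟩ := MatEquiv.symm hB
    obtain ⟨g, hg⟩ := exists_lift_unit n r G
    obtain ⟨k, hk⟩ := exists_lift_unit n s K
    refine ⟨g.val * deltaMat ℂ r s lam * k.val, MatEquiv.symm ⟨g, k, rfl⟩, ?_⟩
    change (g.val * deltaMat ℂ r s lam * k.val).map (piHom n) = B
    rw [Matrix.map_mul, Matrix.map_mul, hg, hk, deltaMat_map, hGK]
  · intro A hA
    obtain ⟨lam, hlam, hAl⟩ := exists_smith r s hrs A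
    refine Set.mem_biUnion (x := lam) ⟨hlam, ?_⟩ hAl
    exact deltaN_unique hrs (truncSeq_antitone n hlam) hmu (truncSeq_le n lam) hm
      ((hmap A lam hAl).symm.trans hA)
  · intro A hA
    obtain ⟨lam, ⟨_, rfl⟩, hAl⟩ := Set.mem_iUnion₂.1 hA
    exact hmap A lam hAl
end

section
/- If k = 0 or k = r−1, the jet ideal I_{n,k} has exactly one minimal prime; equivalently, the n-th jet scheme of the determinantal variety of r × s matrices of rank at most k is irreducible. If 0 < k < r−1, the number of minimal primes of I_{n,k} (equivalently, the number of irreducible components of the n-th jet scheme of the determinantal variety of rank at most k) equals n + 2 − ⌈(n+1)/(k+1)⌉. -/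
/-!
The points of the zero locus of the jet ideal are matrices `M` over `ℂ⟦t⟧`, taken modulo
`t^{n+1}`, all of whose `(k+1) × (k+1)` minors are divisible by `t^{n+1}`. They are covered by
strata `W(a, c)`, consisting of the jets of matrices `∑_{p < k} t^{a p} u_p v_pᵀ + t^c E` with
arbitrary vectors `u_p`, `v_p` and an arbitrary matrix `E`.

* The vanishing ideal of `W(a, c)` is prime, since `W(a, c)` is parametrized by a vector space
  (`famIdeal_isPrime`).
* If `a p ≤ c ≤ n + 1`, minors of size `k + δ` have order at least `∑ a p + δ c` on `W(a, c)`
  (`X_pow_dvd_minor_famMat`, a form of the Cauchy–Binet expansion). So `W(a, c)` lies in the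
  zero locus as soon as `∑ a p + c ≥ n + 1`.
* Gaussian elimination with pivots of minimal order shows that every point of the zero locus lies
  in such a stratum (`exists_eq_famMat`). Lowering exponents enlarges the stratum, so `c = d` and
  `∑ a p = n + 1 - d` may be assumed, with `(n+1)/(k+1) ≤ d ≤ n + 1`.
* An explicit one-parameter degeneration (`famIdeal_move`) shows that moving a unit from a smaller
  to a larger exponent enlarges the closure of the stratum. Hence for each `d` the stratum of the
  most unbalanced exponent vector `(d, …, d, e, 0, …, 0)` has a closure containing all the others
  (`famIdeal_canon_le`).
* For `d < d'`, the `k × k` minors (order `n + 1 - d` against `n + 1 - d'`) and, if `k + 2 ≤ r`,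
  the `(k+2) × (k+2)` minors (order `n + 1 + d` against `n + 1 + d'`) show that neither of the two
  closures contains the other. By the Nullstellensatz, the minimal primes are then in bijection
  with the possible values of `d`.
* For `k = r - 1` the remainder of the elimination has a single nonzero row, so it is a further
  rank one term, and the degeneration applied to all `k + 1` exponents shows that the single
  stratum with exponents `(n + 1, 0, …, 0)` is dense.
-/

/-- The polynomial ring `S = ℂ[x_{i,j}^{(l)}]` in `(n+1)rs` variables. -/
abbrev JetRing (r s n : ℕ) : Type :=
  MvPolynomial (Fin r × Fin s × Fin (n + 1)) ℂ

/-- The generic matrix `X` whose `(i,j)` entry is `∑_{l=0}^n x_{i,j}^{(l)} t^l`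
(viewed in `S[t]`; only coefficients of `t^0, …, t^n` of its minors are used). -/
noncomputable def genMat (r s n : ℕ) :
    Matrix (Fin r) (Fin s) (Polynomial (JetRing r s n)) :=
  Matrix.of fun i j => ∑ l : Fin (n + 1),
    Polynomial.C (MvPolynomial.X (i, j, l)) * Polynomial.X ^ (l : ℕ)

/-- The `n`-th jet ideal `I_{n,k} ⊆ S`: the ideal generated by the coefficients of
`t^0, t^1, …, t^n` of all `(k+1) × (k+1)` minors of the generic matrix. -/
noncomputable def jetIdeal (r s n k : ℕ) : Ideal (JetRing r s n) :=
  Ideal.span {q | ∃ (f : Fin (k + 1) → Fin r) (g : Fin (k + 1) → Fin s) (l : Fin (n + 1)),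
    StrictMono f ∧ StrictMono g ∧
    q = (((genMat r s n).submatrix f g).det).coeff (l : ℕ)}

section JetAux

open PowerSeries

variable {r s n : ℕ}

/-- The coefficients of `t^0, …, t^n` of a matrix of power series, as a point of jet space. -/
noncomputable def jetPt {R : Type*} [CommRing R] (n : ℕ) (M : Matrix (Fin r) (Fin s) R⟦X⟧) :
    Fin r × Fin s × Fin (n + 1) → R :=
  fun p => coeff (p.2.2 : ℕ) (M p.1 p.2.1)

/-- The matrix of polynomials of degree at most `n` (viewed as power series) attached to a point
of jet space. -/
noncomputable def jetMat (x : Fin r × Fin s × Fin (n + 1) → ℂ) : Matrix (Fin r) (Fin s) ℂ⟦X⟧ :=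
  Matrix.of fun i j => ∑ l : Fin (n + 1), C (x (i, j, l)) * X ^ (l : ℕ)

/-- The matrix `∑ₚ t^{a p} • (u p) (v p)ᵀ + t^c • E`. -/
noncomputable def famMat {R ι : Type*} [CommRing R] [Fintype ι] (a : ι → ℕ) (c : ℕ)
    (u : ι → Fin r → R⟦X⟧) (v : ι → Fin s → R⟦X⟧) (E : Matrix (Fin r) (Fin s) R⟦X⟧) :
    Matrix (Fin r) (Fin s) R⟦X⟧ :=
  Matrix.of fun i j => ∑ p, X ^ a p * u p i * v p j + X ^ c * E i j

/-- The vanishing ideal of the set of jets of the form `∑ₚ t^{a p} • (u p) (v p)ᵀ + t^c • E`, where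
`u`, `v`, `E` are arbitrary. This set is called the stratum with exponents `a`, `c`. -/
noncomputable def famIdeal {ι : Type*} [Fintype ι] (r s n : ℕ) (a : ι → ℕ) (c : ℕ) :
    Ideal (JetRing r s n) :=
  MvPolynomial.vanishingIdeal ℂ {x : Fin r × Fin s × Fin (n + 1) → ℂ | ∃ u v E,
    x = jetPt n (famMat a c u v E)}

theorem mem_famIdeal {ι : Type*} [Fintype ι] {a : ι → ℕ} {c : ℕ} {f : JetRing r s n} :
    f ∈ famIdeal r s n a c ↔
      ∀ u v E, MvPolynomial.aeval (jetPt n (famMat (R := ℂ) a c u v E)) f = 0 := by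
  simp only [famIdeal, MvPolynomial.mem_vanishingIdeal_iff, Set.mem_ofPred_eq]
  constructor
  · intro h u v E
    exact h _ ⟨u, v, E, rfl⟩
  · rintro h x ⟨u, v, E, rfl⟩
    exact h u v E

theorem famMat_map {R R' ι : Type*} [CommRing R] [CommRing R'] [Fintype ι] (φ : R →+* R')
    (a : ι → ℕ) (c : ℕ) (u : ι → Fin r → R⟦X⟧) (v : ι → Fin s → R⟦X⟧)
    (E : Matrix (Fin r) (Fin s) R⟦X⟧) :
    (famMat a c u v E).map (PowerSeries.map φ) =
      famMat a c (fun p i => PowerSeries.map φ (u p i)) (fun p j => PowerSeries.map φ (v p j))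
        (E.map (PowerSeries.map φ)) := by
  ext1 i j
  simp [famMat, map_sum]

/-! ### One-parameter families of jets -/

/-- A polynomial function on jet space, restricted to a family of jets depending polynomially on
a parameter `ε`, is a polynomial in `ε`. -/
theorem eval_aeval_jetPt (M : Matrix (Fin r) (Fin s) (Polynomial ℂ)⟦X⟧) (f : JetRing r s n)
    (ε : ℂ) :
    (MvPolynomial.aeval (jetPt n M) f).eval ε =
      MvPolynomial.aeval (jetPt n (M.map (PowerSeries.map (Polynomial.evalRingHom ε)))) f := by
  have h : ((Polynomial.aeval (R := ℂ) ε).comp (MvPolynomial.aeval (R := ℂ) (jetPt n M))) =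
      MvPolynomial.aeval (jetPt n (M.map (PowerSeries.map (Polynomial.evalRingHom ε)))) := by
    apply MvPolynomial.algHom_ext
    intro p
    simp [jetPt]
  have := DFunLike.congr_fun h f
  simpa [Polynomial.aeval_def, Polynomial.eval₂_eq_eval_map] using this

theorem map_eval_map_C (ε : ℂ) (g : ℂ⟦X⟧) :
    PowerSeries.map (Polynomial.evalRingHom ε) (PowerSeries.map Polynomial.C g) = g := by
  ext l
  simp

theorem map_eval_C_X (ε : ℂ) :
    PowerSeries.map (Polynomial.evalRingHom ε) (C (Polynomial.X : Polynomial ℂ)) = C ε := by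
  simp

/-- The parameter space is a vector space, so two parameters lie on a common line, and a product
of two nonzero polynomials in one variable is not identically zero. -/
theorem famIdeal_isPrime {ι : Type*} [Fintype ι] (a : ι → ℕ) (c : ℕ) :
    (famIdeal r s n a c).IsPrime := by
  constructor
  · rw [Ideal.ne_top_iff_one, mem_famIdeal]
    intro h
    simpa using h 0 0 0
  · intro f g hfg
    by_contra! hcon
    obtain ⟨hf, hg⟩ := hcon
    rw [mem_famIdeal] at hf hg hfg
    push Not at hf hg
    obtain ⟨u₁, v₁, E₁, hf⟩ := hf
    obtain ⟨u₂, v₂, E₂, hg⟩ := hg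
    let L : ℂ⟦X⟧ → ℂ⟦X⟧ → (Polynomial ℂ)⟦X⟧ := fun y z =>
      PowerSeries.map Polynomial.C y + C (Polynomial.X : Polynomial ℂ) *
        (PowerSeries.map Polynomial.C (z - y))
    have hL : ∀ ε y z, PowerSeries.map (Polynomial.evalRingHom ε) (L y z) =
        y + C ε * (z - y) := by
      intro ε y z
      simp only [L, map_add, map_mul, map_eval_map_C, map_eval_C_X]
    let M : Matrix (Fin r) (Fin s) (Polynomial ℂ)⟦X⟧ :=
      famMat a c (fun p i => L (u₁ p i) (u₂ p i)) (fun p i => L (v₁ p i) (v₂ p i))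
        (Matrix.of fun i j => L (E₁ i j) (E₂ i j))
    have hM : MvPolynomial.aeval (jetPt n M) f * MvPolynomial.aeval (jetPt n M) g = 0 := by
      apply Polynomial.funext
      intro ε
      rw [← map_mul, eval_aeval_jetPt, famMat_map]
      simpa using hfg _ _ _
    rcases mul_eq_zero.1 hM with h | h
    · apply hf
      have := eval_aeval_jetPt M f 0
      rw [h, famMat_map] at this
      simp only [hL] at this
      rw [Polynomial.eval_zero] at this
      rw [this]
      congr 3
      ext1 i j
      simp [famMat, hL]
    · apply hg
      have := eval_aeval_jetPt M g 1
      rw [h, famMat_map] at this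
      simp only [hL] at this
      rw [Polynomial.eval_zero] at this
      rw [this]
      congr 3
      ext1 i j
      simp [famMat, hL]

/-- If a polynomial vanishes on all jets `M + ε • B` with `ε ≠ 0`, then it vanishes on `M`. -/
theorem aeval_eq_zero_of_forall_ne {f : JetRing r s n} (M B : Matrix (Fin r) (Fin s) ℂ⟦X⟧)
    (h : ∀ ε : ℂ, ε ≠ 0 →
      MvPolynomial.aeval (jetPt n (Matrix.of fun i j => M i j + C ε * B i j)) f = 0) :
    MvPolynomial.aeval (jetPt n M) f = 0 := by
  let N : Matrix (Fin r) (Fin s) (Polynomial ℂ)⟦X⟧ := Matrix.of fun i j =>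
    PowerSeries.map Polynomial.C (M i j) +
      C (Polynomial.X : Polynomial ℂ) * PowerSeries.map Polynomial.C (B i j)
  have hN : ∀ ε : ℂ, N.map (PowerSeries.map (Polynomial.evalRingHom ε)) =
      Matrix.of fun i j => M i j + C ε * B i j := by
    intro ε
    ext1 i j
    simp only [N, Matrix.map_apply, Matrix.of_apply, map_add, map_mul, map_eval_map_C,
      map_eval_C_X]
  have h0 : Polynomial.X * MvPolynomial.aeval (jetPt n N) f = 0 := by
    apply Polynomial.funext
    intro ε
    rw [Polynomial.eval_mul, Polynomial.eval_X, eval_aeval_jetPt, hN]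
    by_cases hε : ε = 0
    · simp [hε]
    · simp [h ε hε]
  have h1 := (mul_eq_zero.1 h0).resolve_left Polynomial.X_ne_zero
  have h2 := eval_aeval_jetPt N f 0
  rw [h1, hN] at h2
  simp only [Polynomial.eval_zero, map_zero, zero_mul, add_zero] at h2
  exact h2.symm

/-! ### Comparison of strata -/

theorem famIdeal_anti {ι : Type*} [Fintype ι] {a a' : ι → ℕ} {c c' : ℕ} (ha : ∀ p, a' p ≤ a p)
    (hc : c' ≤ c) : famIdeal r s n a' c' ≤ famIdeal r s n a c := by
  intro f hf
  rw [mem_famIdeal] at hf ⊢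
  intro u v E
  convert hf (fun p i => X ^ (a p - a' p) * u p i) v (Matrix.of fun i j => X ^ (c - c') * E i j)
    using 3
  congr 1
  ext1 i j
  simp only [famMat, Matrix.of_apply]
  congr 1
  · refine Finset.sum_congr rfl fun p _ => ?_
    rw [← mul_assoc (X ^ a' p), ← pow_add, Nat.add_sub_cancel' (ha p)]
  · rw [← mul_assoc, ← pow_add, Nat.add_sub_cancel' hc]

theorem famIdeal_perm {ι : Type*} [Fintype ι] (a : ι → ℕ) (c : ℕ) (σ : Equiv.Perm ι) :
    famIdeal r s n (a ∘ σ) c ≤ famIdeal r s n a c := by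
  intro f hf
  rw [mem_famIdeal] at hf ⊢
  intro u v E
  convert hf (u ∘ σ) (v ∘ σ) E using 3
  congr 1
  ext1 i j
  simp only [famMat, Matrix.of_apply]
  congr 1
  exact (Equiv.sum_comp σ (fun p => X ^ a p * u p i * v p j)).symm

theorem sum_eq_of_two {ι A : Type*} [Fintype ι] [CommRing A] {i j : ι} (hij : i ≠ j)
    (g g' : ι → A) (e : A) (h : ∀ p, p ≠ i → p ≠ j → g p = g' p)
    (h2 : g i + g j + e = g' i + g' j) : ∑ p, g p + e = ∑ p, g' p := by
  classical
  have key : ∀ g : ι → A, ∑ p, g p = g i + g j + ∑ p ∈ (Finset.univ.erase i).erase j, g p := by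
    intro g
    rw [← Finset.add_sum_erase _ g (Finset.mem_univ i),
      ← Finset.add_sum_erase _ g (Finset.mem_erase.2 ⟨hij.symm, Finset.mem_univ j⟩), add_assoc]
  rw [key g, key g', ← h2]
  rw [Finset.sum_congr rfl (g := g') (s₂ := (Finset.univ.erase i).erase j)]
  · ring
  · intro p hp
    simp only [Finset.mem_erase, Finset.mem_univ, and_true] at hp
    exact h p hp.2 hp.1

/-- Moving one unit from a smaller exponent to a larger one enlarges the closure of the stratum:
for `ε ≠ 0`,
`t^p u vᵀ + t^q w zᵀ + ε t^{p-1} u zᵀ`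
`= t^{p-1} (u + ε⁻¹ t^{q-p+1} w) (t v + ε z)ᵀ - ε⁻¹ t^{q+1} w vᵀ`. -/
theorem famIdeal_move {ι : Type*} [Fintype ι] [DecidableEq ι] (a : ι → ℕ) (c : ℕ) {i j : ι}
    (hij : i ≠ j) (h0 : 0 < a i) (hle : a i ≤ a j) :
    famIdeal r s n (Function.update (Function.update a i (a i - 1)) j (a j + 1)) c ≤
      famIdeal r s n a c := by
  intro f hf
  rw [mem_famIdeal] at hf ⊢
  intro u v E
  apply aeval_eq_zero_of_forall_ne _ (Matrix.of fun x y => X ^ (a i - 1) * u i x * v j y)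
  intro ε hε
  convert hf
    (Function.update (Function.update u i (fun x => u i x + C ε⁻¹ * X ^ (a j - a i + 1) * u j x))
      j (fun x => - C ε⁻¹ * u j x))
    (Function.update (Function.update v i (fun y => X * v i y + C ε * v j y)) j (v i)) E using 3
  congr 1
  ext1 x y
  simp only [famMat, Matrix.of_apply]
  rw [add_right_comm]
  congr 1
  apply sum_eq_of_two hij
  · intro p hp hq
    simp [hp, hq]
  · obtain ⟨p, hp⟩ : ∃ p, a i = p + 1 := ⟨a i - 1, by omega⟩
    obtain ⟨q, hq⟩ : ∃ q, a j = p + 1 + q := ⟨a j - (p + 1), by omega⟩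
    have hC : (C ε : ℂ⟦X⟧) * C ε⁻¹ = 1 := by
      rw [← map_mul, mul_inv_cancel₀ hε, map_one]
    simp only [Function.update_self, Function.update_of_ne hij]
    rw [hq, hp]
    have e1 : p + 1 + q - (p + 1) + 1 = q + 1 := by omega
    have e2 : p + 1 - 1 = p := by omega
    rw [e1, e2]
    linear_combination (-(X : ℂ⟦X⟧) ^ (p + 1 + q) * u j x * v j y) * hC

/-- The most unbalanced exponent vectors with entries bounded by `d`: all entries before a
positive one are equal to `d`. -/
def Canon {m : ℕ} (d : ℕ) (b : Fin m → ℕ) : Prop :=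
  (∀ i, b i ≤ d) ∧ ∀ i j, i < j → b i = d ∨ b j = 0

theorem Canon.eq_of_sum_eq {m d : ℕ} {a b : Fin m → ℕ} (ha : Canon d a) (hb : Canon d b)
    (h : ∑ i, a i = ∑ i, b i) : a = b := by
  induction m with
  | zero => exact Subsingleton.elim _ _
  | succ m ih =>
    rw [Fin.sum_univ_succ, Fin.sum_univ_succ] at h
    have key : ∀ {a b : Fin (m + 1) → ℕ}, Canon d a → Canon d b →
        a 0 + ∑ i : Fin m, a i.succ = b 0 + ∑ i : Fin m, b i.succ → ¬ a 0 < b 0 := by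
      intro a b ha hb h hlt
      have h1 : ∀ i : Fin m, a i.succ = 0 := by
        intro i
        have := ha.2 0 i.succ (Fin.succ_pos i)
        have := hb.1 0
        omega
      simp only [h1, Finset.sum_const_zero] at h
      omega
    have h0 : a 0 = b 0 := by
      have h1 := key ha hb h
      have h2 := key hb ha h.symm
      omega
    have ht : (fun i : Fin m => a i.succ) = fun i => b i.succ := by
      apply ih
      · exact ⟨fun i => ha.1 _, fun i j hij => ha.2 _ _ (Fin.succ_lt_succ_iff.2 hij)⟩
      · exact ⟨fun i => hb.1 _, fun i j hij => hb.2 _ _ (Fin.succ_lt_succ_iff.2 hij)⟩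
      · omega
    funext i
    refine Fin.cases h0 (fun i => congrFun ht i) i

theorem exists_canon (m d T : ℕ) (h : T ≤ m * d) :
    ∃ b : Fin m → ℕ, Canon d b ∧ ∑ i, b i = T := by
  induction m generalizing T with
  | zero => exact ⟨fun _ => 0, ⟨fun _ => by simp, fun i => i.elim0⟩, by simp at h ⊢; omega⟩
  | succ m ih =>
    by_cases hT : T ≤ d
    · refine ⟨Fin.cons T (fun _ => 0), ⟨fun i => ?_, fun i j hij => ?_⟩, by
        simp [Fin.sum_univ_succ]⟩
      · refine Fin.cases ?_ (fun i => ?_) i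
        · simpa using hT
        · simp
      · right
        obtain ⟨j, rfl⟩ := Fin.exists_succ_eq.2 
          (Fin.pos_iff_ne_zero.1 (lt_of_le_of_lt (Fin.zero_le i) hij))
        simp
    · obtain ⟨b, hb, hs⟩ := ih (T - d) (by rw [Nat.succ_mul] at h; omega)
      refine ⟨Fin.cons d b, ⟨fun i => ?_, fun i j hij => ?_⟩, by
        simp [Fin.sum_univ_succ, hs]; omega⟩
      · refine Fin.cases ?_ (fun i => ?_) i
        · simp
        · simpa using hb.1 i
      · obtain ⟨j, rfl⟩ := Fin.exists_succ_eq.2 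
          (Fin.pos_iff_ne_zero.1 (lt_of_le_of_lt (Fin.zero_le i) hij))
        revert hij
        refine Fin.cases ?_ (fun i => ?_) i
        · simp
        · intro hij
          simpa using hb.2 i j (Fin.succ_lt_succ_iff.1 hij)

/-- Every stratum with exponents bounded by `d` lies in the closure of the stratum of the
canonical exponent vector with the same sum. -/
theorem famIdeal_canon_le {m d c : ℕ} {a b : Fin m → ℕ} (ha : ∀ i, a i ≤ d) (hb : Canon d b)
    (h : ∑ i, a i = ∑ i, b i) : famIdeal r s n b c ≤ famIdeal r s n a c := by
  -- Maximize a weighted sum, with decreasing weights, among the vectors whose stratum has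
  -- closure containing that of `a`.
  let S : Set (Fin m → ℕ) := {a' | (∀ i, a' i ≤ d) ∧ ∑ i, a' i = ∑ i, a i ∧
    famIdeal r s n a' c ≤ famIdeal r s n a c}
  have hfin : S.Finite := by
    apply (Set.finite_Iic (fun _ : Fin m => d)).subset
    intro a' ha'
    exact fun i => ha'.1 i
  let Φ : (Fin m → ℕ) → ℤ := fun a' => ∑ i : Fin m, -((i : ℕ) : ℤ) * (a' i : ℤ)
  obtain ⟨e, heS, hmax⟩ := Set.exists_max_image S Φ hfin ⟨a, ha, rfl, le_rfl⟩
  have hswap : ∀ i j : Fin m, i < j → e j ≤ e i := by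
    intro i j hij
    by_contra! hlt
    have hmem : e ∘ Equiv.swap i j ∈ S := by
      refine ⟨fun p => heS.1 _, ?_, (famIdeal_perm e c _).trans heS.2.2⟩
      rw [← heS.2.1]
      exact Equiv.sum_comp (Equiv.swap i j) e
    have hΦ := hmax _ hmem
    have : Φ e + (((j : ℕ) : ℤ) - ((i : ℕ) : ℤ)) * ((e j : ℤ) - (e i : ℤ)) =
        Φ (e ∘ Equiv.swap i j) := by
      apply sum_eq_of_two hij.ne
      · intro p hp hq
        simp [Equiv.swap_apply_of_ne_of_ne hp hq]
      · simp
        ring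
    have h1 : (0 : ℤ) < ((j : ℕ) : ℤ) - ((i : ℕ) : ℤ) := by
      have : (i : ℕ) < j := hij
      omega
    have h2 : (0 : ℤ) < (e j : ℤ) - (e i : ℤ) := by omega
    have := mul_pos h1 h2
    linarith
  have hcan : Canon d e := by
    refine ⟨heS.1, fun i j hij => ?_⟩
    by_contra! hcon
    have hle := hswap i j hij
    have hid := heS.1 i
    let e' := Function.update (Function.update e j (e j - 1)) i (e i + 1)
    have hei : e' i = e i + 1 := by simp [e']
    have hej : e' j = e j - 1 := by simp [e', Function.update_of_ne hij.ne']
    have hep : ∀ p, p ≠ i → p ≠ j → e' p = e p := by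
      intro p hp hq
      simp [e', hp, hq]
    have hmem : e' ∈ S := by
      refine ⟨fun p => ?_, ?_, (famIdeal_move e c hij.ne' (by omega) hle).trans heS.2.2⟩
      · by_cases hp : p = i
        · subst hp; omega
        · by_cases hq : p = j
          · subst hq; have := heS.1 p; omega
          · rw [hep p hp hq]; exact heS.1 p
      · rw [← heS.2.1]
        zify
        rw [← add_zero (∑ x, (e' x : ℤ))]
        apply sum_eq_of_two hij.ne
        · intro p hp hq
          rw [hep p hp hq]
        · rw [hei, hej]
          push_cast [show 1 ≤ e j by omega]
          ring
    have hΦ := hmax _ hmem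
    have : Φ e + (((j : ℕ) : ℤ) - ((i : ℕ) : ℤ)) = Φ e' := by
      apply sum_eq_of_two hij.ne
      · intro p hp hq
        rw [hep p hp hq]
      · rw [hei, hej]
        push_cast [show 1 ≤ e j by omega]
        ring
    have : (i : ℕ) < j := hij
    omega
  have : e = b := hcan.eq_of_sum_eq hb (by rw [heS.2.1, h])
  rw [← this]
  exact heS.2.2

theorem exists_le_sum_eq {m T : ℕ} (a : Fin m → ℕ) (h : T ≤ ∑ i, a i) :
    ∃ a' : Fin m → ℕ, (∀ i, a' i ≤ a i) ∧ ∑ i, a' i = T := by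
  induction m generalizing T with
  | zero => exact ⟨a, fun _ => le_rfl, by simp at h ⊢; omega⟩
  | succ m ih =>
    rw [Fin.sum_univ_succ] at h
    obtain ⟨a', h1, h2⟩ := ih (T := T - min T (a 0)) (fun i => a i.succ) (by omega)
    refine ⟨Fin.cons (min T (a 0)) a', fun i => ?_, ?_⟩
    · refine Fin.cases ?_ (fun i => ?_) i
      · simp
      · simpa using h1 i
    · rw [Fin.sum_univ_succ]
      simp [h2]

/-! ### Minors -/

/-- If `M = ∑ₚ t^{e p} • (column p of U) (row p of V)`, every term in the expansion of its
determinant picks distinct indices `p`. -/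
theorem X_pow_dvd_det {ι : Type*} [Fintype ι] {m : ℕ} (e : ι → ℕ) (U : Fin m → ι → ℂ⟦X⟧)
    (V : ι → Fin m → ℂ⟦X⟧) (N : ℕ)
    (h : ∀ σ : Fin m → ι, Function.Injective σ → N ≤ ∑ i, e (σ i)) :
    X ^ N ∣ (Matrix.of fun i j => ∑ p, X ^ e p * U i p * V p j).det := by
  have h1 : (Matrix.of fun i j => ∑ p, X ^ e p * U i p * V p j) =
      fun i => ∑ p, (X ^ e p * U i p) • V p := by
    ext1 i j
    simp [Finset.sum_apply]
  change X ^ N ∣ Matrix.detRowAlternating.toMultilinearMap _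
  rw [h1, MultilinearMap.map_sum]
  apply Finset.dvd_sum
  intro σ _
  rw [MultilinearMap.map_smul_univ]
  by_cases hσ : Function.Injective σ
  · rw [smul_eq_mul]
    apply Dvd.dvd.mul_right
    rw [Finset.prod_mul_distrib, Finset.prod_pow_eq_pow_sum]
    exact (pow_dvd_pow _ (h σ hσ)).mul_right _
  · obtain ⟨i, j, hij, hne⟩ : ∃ i j, σ i = σ j ∧ i ≠ j := by
      simpa [Function.Injective] using hσ
    have : Matrix.detRowAlternating.toMultilinearMap (fun i => V (σ i)) = 0 :=
      Matrix.detRowAlternating.map_eq_zero_of_eq _ (by simp [hij]) hne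
    rw [this, smul_zero]
    exact dvd_zero _

theorem X_pow_dvd_minor_famMat {ι : Type*} [Fintype ι] {m δ N : ℕ} {a : ι → ℕ} {c : ℕ}
    (hac : ∀ p, a p ≤ c) (hm : m = Fintype.card ι + δ) (hN : N ≤ ∑ p, a p + δ * c)
    (u : ι → Fin r → ℂ⟦X⟧) (v : ι → Fin s → ℂ⟦X⟧) (E : Matrix (Fin r) (Fin s) ℂ⟦X⟧)
    (f : Fin m → Fin r) (g : Fin m → Fin s) :
    X ^ N ∣ ((famMat a c u v E).submatrix f g).det := by
  classical
  let e : ι ⊕ Fin m → ℕ := Sum.elim a fun _ => c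
  have hec : ∀ q, e q ≤ c := by
    rintro (p | q)
    · exact hac p
    · exact le_rfl
  have := X_pow_dvd_det e
    (fun i => Sum.elim (fun p => u p (f i)) fun q => if i = q then 1 else 0)
    (Sum.elim (fun p j => v p (g j)) fun q j => E (f q) (g j)) N (by
      intro σ hσ
      -- The deficits `c - e (σ i)` add up to at most the total deficit of `a`.
      have h1 : ∑ i, (c - e (σ i)) ≤ ∑ p, (c - a p) := by
        calc ∑ i, (c - e (σ i)) = ∑ q ∈ Finset.univ.map ⟨σ, hσ⟩, (c - e q) := by simp
          _ ≤ ∑ q, (c - e q) := Finset.sum_le_sum_of_subset (Finset.subset_univ _)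
          _ = ∑ p, (c - a p) := by simp [e]
      have h2 : ∑ i, (c - e (σ i)) + ∑ i, e (σ i) = m * c := by
        rw [← Finset.sum_add_distrib]
        simp [Nat.sub_add_cancel (hec _)]
      have h3 : ∑ p, (c - a p) + ∑ p, a p = Fintype.card ι * c := by
        rw [← Finset.sum_add_distrib]
        simp [Nat.sub_add_cancel (hac _)]
      have h4 : m * c = Fintype.card ι * c + δ * c := by rw [hm, add_mul]
      omega)
  convert this using 2
  ext1 i j
  simp [famMat, e]

/-! ### Points of jet space and matrices -/

theorem coeff_jetMat (x : Fin r × Fin s × Fin (n + 1) → ℂ) (i : Fin r) (j : Fin s) (l : ℕ) :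
    coeff l (jetMat x i j) = if h : l < n + 1 then x (i, j, ⟨l, h⟩) else 0 := by
  simp only [jetMat, Matrix.of_apply, map_sum, coeff_C_mul, coeff_X_pow, mul_ite, mul_one,
    mul_zero]
  split_ifs with h
  · rw [Finset.sum_eq_single ⟨l, h⟩]
    · simp
    · intro b _ hb
      rw [if_neg]
      rintro rfl
      exact hb rfl
    · simp
  · apply Finset.sum_eq_zero
    intro b _
    rw [if_neg]
    rintro rfl
    exact h b.2

theorem jetPt_jetMat (x : Fin r × Fin s × Fin (n + 1) → ℂ) : jetPt n (jetMat x) = x := by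
  funext ⟨i, j, l⟩
  simp only [jetPt, coeff_jetMat, l.2, dif_pos]

theorem jetMat_jetPt_eq_add (M : Matrix (Fin r) (Fin s) ℂ⟦X⟧) :
    ∃ B : Matrix (Fin r) (Fin s) ℂ⟦X⟧,
      jetMat (jetPt n M) = Matrix.of fun i j => M i j + X ^ (n + 1) * B i j := by
  have h : ∀ i j, X ^ (n + 1) ∣ jetMat (jetPt n M) i j - M i j := by
    intro i j
    rw [X_pow_dvd_iff]
    intro l hl
    rw [map_sub, coeff_jetMat, dif_pos hl]
    simp [jetPt]
  choose B hB using h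
  refine ⟨Matrix.of B, ?_⟩
  ext1 i j
  rw [Matrix.of_apply, Matrix.of_apply, ← hB]
  ring

theorem jetMat_jetPt_apply_of_eq_X_pow {M : Matrix (Fin r) (Fin s) ℂ⟦X⟧} {i : Fin r} {j : Fin s}
    {e : ℕ} (he : e ≤ n) (hM : M i j = X ^ e) : jetMat (jetPt n M) i j = X ^ e := by
  ext l
  rw [coeff_jetMat]
  split_ifs with h
  · simp [jetPt, hM]
  · rw [coeff_X_pow, if_neg (by omega)]

theorem jetMat_jetPt_apply_of_eq_zero {M : Matrix (Fin r) (Fin s) ℂ⟦X⟧} {i : Fin r} {j : Fin s}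
    (hM : M i j = 0) : jetMat (jetPt n M) i j = 0 := by
  ext l
  rw [coeff_jetMat]
  split_ifs with h
  · simp [jetPt, hM]
  · simp

theorem jetMat_jetPt_famMat {ι : Type*} [Fintype ι] {a : ι → ℕ} {c : ℕ} (hc : c ≤ n + 1)
    (u : ι → Fin r → ℂ⟦X⟧) (v : ι → Fin s → ℂ⟦X⟧) (E : Matrix (Fin r) (Fin s) ℂ⟦X⟧) :
    ∃ E', jetMat (jetPt n (famMat a c u v E)) = famMat a c u v E' := by
  obtain ⟨B, hB⟩ := jetMat_jetPt_eq_add (n := n) (famMat a c u v E)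
  refine ⟨Matrix.of fun i j => E i j + X ^ (n + 1 - c) * B i j, ?_⟩
  rw [hB]
  ext1 i j
  simp only [famMat, Matrix.of_apply]
  rw [mul_add, ← mul_assoc (X ^ c), ← pow_add, Nat.add_sub_cancel' hc]
  ring

/-- The coefficient of `t^l` in a minor of the generic matrix. -/
noncomputable def minorCoeff {m : ℕ} (f : Fin m → Fin r) (g : Fin m → Fin s) (l : ℕ) :
    JetRing r s n :=
  (((genMat r s n).submatrix f g).det).coeff l

theorem aeval_minorCoeff {m : ℕ} (f : Fin m → Fin r) (g : Fin m → Fin s) (l : ℕ)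
    (x : Fin r × Fin s × Fin (n + 1) → ℂ) :
    MvPolynomial.aeval x (minorCoeff f g l : JetRing r s n) =
      coeff l ((jetMat x).submatrix f g).det := by
  let ψ : Polynomial (JetRing r s n) →+* ℂ⟦X⟧ :=
    Polynomial.coeToPowerSeries.ringHom.comp
      (Polynomial.mapRingHom (MvPolynomial.aeval x : JetRing r s n →ₐ[ℂ] ℂ).toRingHom)
  have h1 : ψ ((genMat r s n).submatrix f g).det = ((jetMat x).submatrix f g).det := by
    rw [RingHom.map_det]
    congr 1
    ext1 i j
    simp [ψ, genMat, jetMat, Polynomial.map_sum]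
  rw [← h1]
  simp [ψ, minorCoeff]

theorem mem_zeroLocus_jetIdeal {k : ℕ} {x : Fin r × Fin s × Fin (n + 1) → ℂ} :
    x ∈ MvPolynomial.zeroLocus ℂ (jetIdeal r s n k) ↔
      ∀ (f : Fin (k + 1) → Fin r) (g : Fin (k + 1) → Fin s), StrictMono f → StrictMono g →
        X ^ (n + 1) ∣ ((jetMat x).submatrix f g).det := by
  rw [jetIdeal, MvPolynomial.zeroLocus_span]
  constructor
  · intro h f g hf hg
    rw [X_pow_dvd_iff]
    intro l hl
    rw [← aeval_minorCoeff]
    exact h _ ⟨f, g, ⟨l, hl⟩, hf, hg, rfl⟩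
  · rintro h _ ⟨f, g, l, hf, hg, rfl⟩
    have := X_pow_dvd_iff.1 (h f g hf hg) l l.2
    rwa [← aeval_minorCoeff] at this

theorem exists_perm_strictMono {m q : ℕ} (f : Fin m → Fin q) (hf : Function.Injective f) :
    ∃ (f' : Fin m → Fin q) (σ : Equiv.Perm (Fin m)), StrictMono f' ∧ f = f' ∘ σ := by
  refine ⟨f ∘ Tuple.sort f, (Tuple.sort f)⁻¹, ?_, ?_⟩
  · exact (Tuple.monotone_sort f).strictMono_of_injective (hf.comp (Equiv.injective _))
  · funext i
    simp

theorem X_pow_dvd_minor_of_strictMono {m N : ℕ} {M : Matrix (Fin r) (Fin s) ℂ⟦X⟧}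
    (h : ∀ (f : Fin m → Fin r) (g : Fin m → Fin s), StrictMono f → StrictMono g →
      X ^ N ∣ (M.submatrix f g).det) (f : Fin m → Fin r) (g : Fin m → Fin s) :
    X ^ N ∣ (M.submatrix f g).det := by
  by_cases hf : Function.Injective f
  · by_cases hg : Function.Injective g
    · obtain ⟨f', σ, hf', rfl⟩ := exists_perm_strictMono f hf
      obtain ⟨g', τ, hg', rfl⟩ := exists_perm_strictMono g hg
      have e : M.submatrix (f' ∘ σ) (g' ∘ τ) =
          ((M.submatrix f' g').submatrix σ id).submatrix id τ := by
        ext1 i j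
        simp
      rw [e, Matrix.det_permute', Matrix.det_permute]
      exact ((h f' g' hf' hg').mul_left _).mul_left _
    · obtain ⟨i, j, hij, hne⟩ : ∃ i j, g i = g j ∧ i ≠ j := by
        simpa [Function.Injective] using hg
      rw [Matrix.det_zero_of_column_eq hne (by simp [hij])]
      exact dvd_zero _
  · obtain ⟨i, j, hij, hne⟩ : ∃ i j, f i = f j ∧ i ≠ j := by
      simpa [Function.Injective] using hf
    rw [Matrix.det_zero_of_row_eq hne (by funext; simp [hij])]
    exact dvd_zero _

theorem jetIdeal_le_famIdeal {ι : Type*} [Fintype ι] {k δ : ℕ} {a : ι → ℕ} {c : ℕ}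
    (hac : ∀ p, a p ≤ c) (hc : c ≤ n + 1) (hk : k + 1 = Fintype.card ι + δ)
    (hN : n + 1 ≤ ∑ p, a p + δ * c) : jetIdeal r s n k ≤ famIdeal r s n a c := by
  rw [famIdeal, ← MvPolynomial.le_zeroLocus_iff_le_vanishingIdeal]
  rintro x ⟨u, v, E, rfl⟩
  rw [mem_zeroLocus_jetIdeal]
  intro f g _ _
  obtain ⟨E', hE'⟩ := jetMat_jetPt_famMat (a := a) hc u v E
  rw [hE']
  exact X_pow_dvd_minor_famMat hac hk hN _ _ _ _ _

/-! ### Gaussian elimination over `ℂ⟦t⟧` -/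

theorem exists_pivot {M : Matrix (Fin r) (Fin s) ℂ⟦X⟧} {b : ℕ} (hb : ∀ i j, X ^ b ∣ M i j)
    (hM : M ≠ 0) : ∃ (e : ℕ) (M₁ : Matrix (Fin r) (Fin s) ℂ⟦X⟧) (i₀ : Fin r) (j₀ : Fin s),
      b ≤ e ∧ (∀ i j, M i j = X ^ e * M₁ i j) ∧ IsUnit (M₁ i₀ j₀) := by
  classical
  have hex : ∃ m, ¬ ∀ i j, (X : ℂ⟦X⟧) ^ m ∣ M i j := by
    by_contra! hcon
    apply hM
    ext i j l
    simpa using X_pow_dvd_iff.1 (hcon (l + 1) i j) l (by omega)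
  have hspec := Nat.find_spec hex
  have hlt : b < Nat.find hex := by
    by_contra hle
    rw [not_lt] at hle
    exact hspec fun i j => (pow_dvd_pow _ hle).trans (hb i j)
  obtain ⟨e, he⟩ : ∃ e, Nat.find hex = e + 1 := ⟨Nat.find hex - 1, by omega⟩
  have hdvd : ∀ i j, (X : ℂ⟦X⟧) ^ e ∣ M i j := by
    have := Nat.find_min hex (m := e) (by omega)
    push Not at this
    exact this
  choose M₁ hM₁ using hdvd
  rw [he] at hspec
  push Not at hspec
  obtain ⟨i₀, j₀, hij⟩ := hspec
  refine ⟨e, Matrix.of M₁, i₀, j₀, by omega, hM₁, ?_⟩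
  rw [Matrix.of_apply, isUnit_iff_constantCoeff, isUnit_iff_ne_zero]
  intro h0
  rw [← X_dvd_iff] at h0
  apply hij
  rw [hM₁, pow_succ]
  exact mul_dvd_mul_left _ h0

/-- Eliminating with a pivot of minimal order `e` peels off one rank one matrix `t^e • u vᵀ`; the
minors of the remaining matrix lose one row and column and a factor `t^e`. After `k` steps, all
entries of what remains are highly divisible. -/
theorem exists_eq_famMat (k : ℕ) : ∀ (M : Matrix (Fin r) (Fin s) ℂ⟦X⟧) (b N : ℕ)
    (Z : Finset (Fin r)), Z.card + k ≤ r → (∀ i ∈ Z, ∀ j, M i j = 0) → (∀ i j, X ^ b ∣ M i j) →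
    (∀ (f : Fin (k + 1) → Fin r) (g : Fin (k + 1) → Fin s), X ^ N ∣ (M.submatrix f g).det) →
    ∃ (a : Fin k → ℕ) (c : ℕ) (u : Fin k → Fin r → ℂ⟦X⟧) (v : Fin k → Fin s → ℂ⟦X⟧)
      (E : Matrix (Fin r) (Fin s) ℂ⟦X⟧) (Z' : Finset (Fin r)),
      (∀ p, b ≤ a p) ∧ b ≤ c ∧ (∀ p, a p ≤ c) ∧ N ≤ ∑ p, a p + c ∧ M = famMat a c u v E ∧
      (∀ i ∈ Z', ∀ j, E i j = 0) ∧ Z.card + k ≤ Z'.card := by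
  induction k with
  | zero =>
    intro M b N Z _ hZ hb hN
    have hdvd : ∀ i j, (X : ℂ⟦X⟧) ^ max b N ∣ M i j := by
      intro i j
      have := hN (fun _ => i) (fun _ => j)
      rw [Matrix.det_fin_one] at this
      rcases le_total b N with h | h
      · rw [max_eq_right h]
        exact this
      · rw [max_eq_left h]
        exact hb i j
    choose E hE using hdvd
    refine ⟨Fin.elim0, max b N, Fin.elim0, Fin.elim0, Matrix.of E, Z, fun p => p.elim0,
      le_max_left _ _, fun p => p.elim0, by simp, ?_, ?_, le_rfl⟩
    · ext1 i j
      simp [famMat, hE i j]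
    · intro i hi j
      have h := hE i j
      rw [hZ i hi j] at h
      exact (mul_eq_zero.1 h.symm).resolve_left (pow_ne_zero _ X_ne_zero)
  | succ k ih =>
    intro M b N Z hcard hZ hb hN
    by_cases hM : M = 0
    · refine ⟨fun _ => max b N, max b N, 0, 0, 0, Finset.univ, fun _ => le_max_left _ _,
        le_max_left _ _, fun _ => le_rfl, ?_, ?_, by simp, by simpa using hcard⟩
      · have := le_max_right b N
        omega
      · rw [hM]
        ext1 i j
        simp [famMat]
    · obtain ⟨e, M₁, i₀, j₀, hbe, hM₁, w, hw⟩ := exists_pivot hb hM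
      have hww : M₁ i₀ j₀ * (↑w⁻¹ : ℂ⟦X⟧) = 1 := by rw [← hw]; exact w.mul_inv
      let u₀ : Fin r → ℂ⟦X⟧ := fun i => M₁ i j₀ * (↑w⁻¹ : ℂ⟦X⟧)
      let v₀ : Fin s → ℂ⟦X⟧ := fun j => M₁ i₀ j
      let M' : Matrix (Fin r) (Fin s) ℂ⟦X⟧ :=
        Matrix.of fun i j => X ^ e * (M₁ i j - u₀ i * v₀ j)
      have hu₀ : u₀ i₀ = 1 := hww
      have hi₀ : i₀ ∉ Z := by
        intro hmem
        have := hZ i₀ hmem j₀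
        rw [hM₁] at this
        have := (mul_eq_zero.1 this).resolve_left (pow_ne_zero _ X_ne_zero)
        rw [this, zero_mul] at hww
        exact zero_ne_one hww
      have hZM₁ : ∀ i ∈ Z, ∀ j, M₁ i j = 0 := by
        intro i hi j
        have := hZ i hi j
        rw [hM₁] at this
        exact (mul_eq_zero.1 this).resolve_left (pow_ne_zero _ X_ne_zero)
      have hminor : ∀ (f : Fin (k + 1) → Fin r) (g : Fin (k + 1) → Fin s),
          X ^ (N - e) ∣ (M'.submatrix f g).det := by
        intro f g
        have h1 := hN (Fin.cons i₀ f) (Fin.cons j₀ g)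
        let B : Matrix (Fin (k + 2)) (Fin (k + 2)) ℂ⟦X⟧ := Matrix.of
          (Fin.cons (fun j => M i₀ ((Fin.cons j₀ g : Fin (k + 2) → Fin s) j))
            fun i j => M' (f i) ((Fin.cons j₀ g : Fin (k + 2) → Fin s) j))
        have h2 : (M.submatrix (Fin.cons i₀ f) (Fin.cons j₀ g)).det = B.det := by
          apply Matrix.det_eq_of_forall_row_eq_smul_add_const
            (Fin.cons 0 fun i => u₀ (f i)) 0 (by simp)
          intro i j
          refine Fin.cases ?_ (fun i => ?_) i
          · simp [B]
          · simp only [B, M', Matrix.submatrix_apply, Fin.cons_succ, Matrix.of_apply,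
              Fin.cons_zero, hM₁, v₀]
            ring
        have h3 : B.det = X ^ e * M₁ i₀ j₀ * (M'.submatrix f g).det := by
          rw [Matrix.det_succ_column_zero, Fin.sum_univ_succ, Finset.sum_eq_zero]
          · have : B.submatrix (Fin.succAbove 0) Fin.succ = M'.submatrix f g := by
              ext1 i j
              simp [B]
            rw [this]
            simp [B, hM₁]
          · intro i _
            have : B i.succ 0 = 0 := by
              simp only [B, M', Matrix.of_apply, Fin.cons_succ, Fin.cons_zero, u₀, v₀]
              linear_combination (-(X : ℂ⟦X⟧) ^ e * M₁ (f i) j₀) * hww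
            rw [this]
            simp
        rw [h2, h3] at h1
        have h4 : X ^ N ∣ X ^ e * (M'.submatrix f g).det := by
          have := h1.mul_right (↑w⁻¹ : ℂ⟦X⟧)
          have e1 : X ^ e * M₁ i₀ j₀ * (M'.submatrix f g).det * (↑w⁻¹ : ℂ⟦X⟧) =
              X ^ e * (M'.submatrix f g).det := by
            linear_combination (X ^ e * (M'.submatrix f g).det) * hww
          rwa [e1] at this
        rcases le_total e N with h | h
        · rw [← Nat.add_sub_cancel' h, pow_add] at h4
          exact (mul_dvd_mul_iff_left (pow_ne_zero _ X_ne_zero)).1 h4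
        · simp [Nat.sub_eq_zero_of_le h]
      obtain ⟨a, c, u, v, E, Z', h1, h2, h3, h4, h5, h6, h7⟩ :=
        ih M' e (N - e) (insert i₀ Z) (by rw [Finset.card_insert_of_notMem hi₀]; omega) (by
          intro i hi j
          rcases Finset.mem_insert.1 hi with rfl | hi
          · simp [M', hu₀, v₀]
          · simp [M', u₀, hZM₁ i hi]) (fun i j => Dvd.intro _ rfl) hminor
      refine ⟨Fin.cons e a, c, Fin.cons u₀ u, Fin.cons v₀ v, E, Z', ?_, hbe.trans h2, ?_, ?_, ?_,
        h6, ?_⟩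
      · intro p
        refine Fin.cases ?_ (fun p => ?_) p
        · simpa using hbe
        · simpa using hbe.trans (h1 p)
      · intro p
        refine Fin.cases ?_ (fun p => ?_) p
        · simpa using h2
        · simpa using h3 p
      · simp only [Fin.sum_univ_succ, Fin.cons_zero, Fin.cons_succ]
        omega
      · ext1 i j
        have h := congrFun (congrFun h5 i) j
        simp only [famMat, M', Matrix.of_apply] at h
        simp only [famMat, Matrix.of_apply, Fin.sum_univ_succ, Fin.cons_zero, Fin.cons_succ,
          hM₁ i j]
        linear_combination h
      · rw [Finset.card_insert_of_notMem hi₀] at h7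
        omega

/-! ### Separating the strata -/

/-- The stratum with exponents `b`, `c` contains the diagonal matrix with entries `t^{b i}` for
`i < k` and `t^c` for `i ≥ k`; its leading principal `m × m` minor is visible in the jet as soon
as the exponents involved are at most `n`. -/
theorem minorCoeff_notMem_famIdeal {k m : ℕ} (hmr : m ≤ r) (hrs : r ≤ s) (b : Fin k → ℕ) (c : ℕ)
    (hle : ∀ i : Fin m, (if h : (i : ℕ) < k then b ⟨i, h⟩ else c) ≤ n) :
    (minorCoeff (Fin.castLE hmr) (Fin.castLE (hmr.trans hrs))
      (∑ i : Fin m, if h : (i : ℕ) < k then b ⟨i, h⟩ else c) : JetRing r s n) ∉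
      famIdeal r s n b c := by
  intro hmem
  rw [mem_famIdeal] at hmem
  let M : Matrix (Fin r) (Fin s) ℂ⟦X⟧ := famMat b c
    (fun p i => if (i : ℕ) = p then 1 else 0) (fun p j => if (j : ℕ) = p then 1 else 0)
    (Matrix.of fun i j => if k ≤ (i : ℕ) ∧ (i : ℕ) = j then 1 else 0)
  have hdiag : ∀ (i : Fin r) (j : Fin s), (i : ℕ) = j →
      M i j = X ^ (if h : (i : ℕ) < k then b ⟨i, h⟩ else c) := by
    intro i j hij
    simp only [M, famMat, Matrix.of_apply, ← hij]
    by_cases h : (i : ℕ) < k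
    · rw [dif_pos h, Finset.sum_eq_single ⟨i, h⟩]
      · simp [h]
      · intro p _ hp
        rw [if_neg]
        · simp
        · rintro hip
          exact hp (Fin.ext hip.symm)
      · simp
    · rw [dif_neg h, Finset.sum_eq_zero]
      · simp [Nat.le_of_not_lt h]
      · intro p _
        have := p.2
        rw [if_neg (by omega)]
        simp
  have hoff : ∀ (i : Fin r) (j : Fin s), (i : ℕ) ≠ j → M i j = 0 := by
    intro i j hij
    simp only [M, famMat, Matrix.of_apply]
    rw [Finset.sum_eq_zero]
    · simp [hij]
    · intro p _
      by_cases h : (i : ℕ) = p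
      · rw [if_neg (c := (j : ℕ) = p) (by omega)]
        simp
      · simp [h]
  have hsub : (jetMat (jetPt n M)).submatrix (Fin.castLE hmr) (Fin.castLE (hmr.trans hrs)) =
      Matrix.diagonal fun i : Fin m => X ^ (if h : (i : ℕ) < k then b ⟨i, h⟩ else c) := by
    ext1 i j
    rw [Matrix.submatrix_apply]
    by_cases hij : i = j
    · subst hij
      rw [Matrix.diagonal_apply_eq]
      exact jetMat_jetPt_apply_of_eq_X_pow (hle i) (hdiag _ _ rfl)
    · rw [Matrix.diagonal_apply_ne _ hij]
      exact jetMat_jetPt_apply_of_eq_zero (hoff _ _ fun h => hij (Fin.ext h))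
  have h := hmem (fun p i => if (i : ℕ) = p then 1 else 0) (fun p j => if (j : ℕ) = p then 1 else 0)
    (Matrix.of fun i j => if k ≤ (i : ℕ) ∧ (i : ℕ) = j then 1 else 0)
  change MvPolynomial.aeval (jetPt n M) _ = 0 at h
  rw [aeval_minorCoeff, hsub, Matrix.det_diagonal, Finset.prod_pow_eq_pow_sum, coeff_X_pow_self]
    at h
  exact one_ne_zero h

theorem minorCoeff_mem_famIdeal {ι : Type*} [Fintype ι] {m δ l : ℕ} {a : ι → ℕ} {c : ℕ}
    (hac : ∀ p, a p ≤ c) (hc : c ≤ n + 1) (hm : m = Fintype.card ι + δ)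
    (hl : l < ∑ p, a p + δ * c) (f : Fin m → Fin r) (g : Fin m → Fin s) :
    (minorCoeff f g l : JetRing r s n) ∈ famIdeal r s n a c := by
  rw [mem_famIdeal]
  intro u v E
  obtain ⟨E', hE'⟩ := jetMat_jetPt_famMat (a := a) hc u v E
  rw [aeval_minorCoeff, hE']
  exact X_pow_dvd_iff.1 (X_pow_dvd_minor_famMat hac hm (Nat.succ_le_of_lt hl) u v E' f g) l
    (Nat.lt_succ_self l)

/-- The `k × k` minors have larger order on the stratum with the smaller `d`. -/
theorem not_famIdeal_le_of_lt {k d d' : ℕ} (hkr : k ≤ r) (hrs : r ≤ s) {b b' : Fin k → ℕ}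
    (hb : ∀ i, b i ≤ d) (hd : d < d') (hd' : d' ≤ n + 1) (hs : ∑ i, b i = n + 1 - d)
    (hs' : ∑ i, b' i = n + 1 - d') : ¬ famIdeal r s n b d ≤ famIdeal r s n b' d' := by
  intro hle
  have hsum : (∑ i : Fin k, if h : (i : ℕ) < k then b' ⟨i, h⟩ else d') = n + 1 - d' := by
    rw [← hs']
    exact Finset.sum_congr rfl fun i _ => by simp
  refine minorCoeff_notMem_famIdeal hkr hrs b' d' ?_ (hle ?_)
  · intro i
    rw [dif_pos i.2]
    have := Finset.single_le_sum (f := b') (fun _ _ => Nat.zero_le _) (Finset.mem_univ i)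
    have e : b' ⟨i, i.2⟩ = b' i := rfl
    omega
  · apply minorCoeff_mem_famIdeal (δ := 0) hb (by omega) (by simp)
    omega

/-- The `(k + 2) × (k + 2)` minors have larger order on the stratum with the larger `d`. -/
theorem not_famIdeal_le_of_gt {k d d' : ℕ} (hkr : k + 2 ≤ r) (hrs : r ≤ s) {b b' : Fin k → ℕ}
    (hb : ∀ i, b i ≤ d) (hb' : ∀ i, b' i ≤ d') (hd : d < d') (hd' : d' ≤ n + 1)
    (hs : ∑ i, b i = n + 1 - d) (hs' : ∑ i, b' i = n + 1 - d') :
    ¬ famIdeal r s n b' d' ≤ famIdeal r s n b d := by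
  intro hle
  have hsum : (∑ i : Fin (k + 2), if h : (i : ℕ) < k then b ⟨i, h⟩ else d) = n + 1 - d + 2 * d := by
    rw [← hs, Fin.sum_univ_castSucc, Fin.sum_univ_castSucc]
    simp
    omega
  refine minorCoeff_notMem_famIdeal hkr hrs b d ?_ (hle ?_)
  · intro i
    split_ifs with h
    · have := hb ⟨i, h⟩
      omega
    · omega
  · apply minorCoeff_mem_famIdeal (δ := 2) hb' (by omega) (by simp)
    omega

/-! ### Covering the jet scheme by strata -/

theorem exists_eq_famMat_of_mem_zeroLocus {k : ℕ} (hkr : k < r)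
    {x : Fin r × Fin s × Fin (n + 1) → ℂ}
    (hx : x ∈ MvPolynomial.zeroLocus ℂ (jetIdeal r s n k)) :
    ∃ (a : Fin k → ℕ) (c : ℕ) (u : Fin k → Fin r → ℂ⟦X⟧) (v : Fin k → Fin s → ℂ⟦X⟧)
      (E : Matrix (Fin r) (Fin s) ℂ⟦X⟧) (Z' : Finset (Fin r)),
      (∀ p, a p ≤ c) ∧ n + 1 ≤ ∑ p, a p + c ∧ x = jetPt n (famMat a c u v E) ∧
      (∀ i ∈ Z', ∀ j, E i j = 0) ∧ k ≤ Z'.card := by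
  rw [mem_zeroLocus_jetIdeal] at hx
  obtain ⟨a, c, u, v, E, Z', -, -, h3, h4, h5, h6, h7⟩ :=
    exists_eq_famMat k (jetMat x) 0 (n + 1) ∅ (by simpa using hkr.le) (by simp) (by simp)
      (X_pow_dvd_minor_of_strictMono hx)
  exact ⟨a, c, u, v, E, Z', h3, h4, by rw [← h5, jetPt_jetMat], h6, by simpa using h7⟩

theorem famIdeal_le_vanishingIdeal {ι : Type*} [Fintype ι] (a : ι → ℕ) (c : ℕ)
    (u : ι → Fin r → ℂ⟦X⟧) (v : ι → Fin s → ℂ⟦X⟧) (E : Matrix (Fin r) (Fin s) ℂ⟦X⟧) :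
    famIdeal r s n a c ≤ MvPolynomial.vanishingIdeal ℂ {jetPt n (famMat a c u v E)} := by
  apply MvPolynomial.vanishingIdeal_anti_mono
  rintro x rfl
  exact ⟨u, v, E, rfl⟩

theorem exists_famIdeal_le {k : ℕ} (hkr : k < r) {x : Fin r × Fin s × Fin (n + 1) → ℂ}
    (hx : x ∈ MvPolynomial.zeroLocus ℂ (jetIdeal r s n k)) :
    ∃ (d : ℕ) (a : Fin k → ℕ), n + 1 ≤ (k + 1) * d ∧ d ≤ n + 1 ∧ (∀ i, a i ≤ d) ∧
      ∑ i, a i = n + 1 - d ∧ famIdeal r s n a d ≤ MvPolynomial.vanishingIdeal ℂ {x} := by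
  obtain ⟨a, c, u, v, E, -, hac, hN, rfl, -, -⟩ := exists_eq_famMat_of_mem_zeroLocus hkr hx
  have hsum : ∑ i, a i ≤ k * c := by
    simpa using Finset.sum_le_card_nsmul Finset.univ a c fun i _ => hac i
  rcases le_total c (n + 1) with hc | hc
  · obtain ⟨a', ha', hs⟩ := exists_le_sum_eq (T := n + 1 - c) a (by omega)
    refine ⟨c, a', by rw [add_mul]; omega, hc, fun i => (ha' i).trans (hac i), hs, ?_⟩
    exact (famIdeal_anti ha' le_rfl).trans (famIdeal_le_vanishingIdeal _ _ _ _ _)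
  · refine ⟨n + 1, fun _ => 0, Nat.le_mul_of_pos_left _ (by omega), le_rfl, by simp, by simp, ?_⟩
    exact (famIdeal_anti (fun _ => Nat.zero_le _) hc).trans (famIdeal_le_vanishingIdeal _ _ _ _ _)

/-- When `k = r - 1`, the remainder after `k` elimination steps lives in a single row, so it has
rank one as well. -/
theorem exists_famIdeal_le_of_eq {k : ℕ} (hkr : k + 1 = r) {x : Fin r × Fin s × Fin (n + 1) → ℂ}
    (hx : x ∈ MvPolynomial.zeroLocus ℂ (jetIdeal r s n k)) :
    ∃ a : Fin (k + 1) → ℕ, ∑ i, a i = n + 1 ∧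
      famIdeal r s n a (n + 1) ≤ MvPolynomial.vanishingIdeal ℂ {x} := by
  obtain ⟨a, c, u, v, E, Z, hac, hN, rfl, hZ, hcard⟩ :=
    exists_eq_famMat_of_mem_zeroLocus (by omega) hx
  obtain ⟨i₁, hi₁⟩ : ∃ i₁ : Fin r, ∀ i, i ≠ i₁ → i ∈ Z := by
    have h : Zᶜ.card ≤ 1 := by
      rw [Finset.card_compl, Fintype.card_fin]
      omega
    rw [Finset.card_le_one] at h
    by_cases hne : Zᶜ.Nonempty
    · obtain ⟨i₁, h1⟩ := hne
      refine ⟨i₁, fun i hi => ?_⟩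
      by_contra hiZ
      exact hi (h i (Finset.mem_compl.2 hiZ) i₁ h1)
    · refine ⟨⟨0, by omega⟩, fun i _ => ?_⟩
      by_contra hiZ
      exact hne ⟨i, Finset.mem_compl.2 hiZ⟩
  obtain ⟨a', ha', hs⟩ := exists_le_sum_eq (T := n + 1) (Fin.cons c a : Fin (k + 1) → ℕ) (by
    simp only [Fin.sum_univ_succ, Fin.cons_zero, Fin.cons_succ]
    omega)
  refine ⟨a', hs, (famIdeal_anti ha' le_rfl).trans ?_⟩
  have hM : famMat a c u v E = famMat (Fin.cons c a : Fin (k + 1) → ℕ) (n + 1)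
      (Fin.cons (fun i => if i = i₁ then 1 else 0) u) (Fin.cons (fun j => E i₁ j) v) 0 := by
    ext1 i j
    simp only [famMat, Matrix.of_apply, Fin.sum_univ_succ, Fin.cons_zero, Fin.cons_succ]
    by_cases hi : i = i₁
    · subst hi
      simp
      ring
    · simp [hi, hZ i (hi₁ i hi)]
  rw [hM]
  exact famIdeal_le_vanishingIdeal _ _ _ _ _

/-! ### Counting minimal primes -/

theorem ncard_minimalPrimes_eq {σ : Type*} [Finite σ] (I : Ideal (MvPolynomial σ ℂ)) (D : Finset ℕ)
    (P : ℕ → Ideal (MvPolynomial σ ℂ)) (hP : ∀ d ∈ D, (P d).IsPrime) (hI : ∀ d ∈ D, I ≤ P d)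
    (hcov : ∀ x ∈ MvPolynomial.zeroLocus ℂ I, ∃ d ∈ D, P d ≤ MvPolynomial.vanishingIdeal ℂ {x})
    (hanti : ∀ d ∈ D, ∀ d' ∈ D, P d ≤ P d' → d = d') : I.minimalPrimes.ncard = D.card := by
  have hmin : ∀ Q : Ideal (MvPolynomial σ ℂ), Q.IsPrime → I ≤ Q → ∃ d ∈ D, P d ≤ Q := by
    intro Q hQ hIQ
    rw [← hQ.inf_le']
    refine le_trans ?_ (hQ.radical_le_iff.2 hIQ)
    rw [← MvPolynomial.vanishingIdeal_zeroLocus_eq_radical (K := ℂ)]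
    intro f hf x hx
    obtain ⟨d, hd, hle⟩ := hcov x hx
    exact hle (Finset.inf_le (f := P) hd hf) x rfl
  have heq : I.minimalPrimes = P '' (D : Set ℕ) := by
    ext Q
    constructor
    · intro hQ
      obtain ⟨d, hd, hle⟩ := hmin Q hQ.1.1 hQ.1.2
      exact ⟨d, hd, le_antisymm hle (hQ.2 ⟨hP d hd, hI d hd⟩ hle)⟩
    · rintro ⟨d, hd, rfl⟩
      refine ⟨⟨hP d hd, hI d hd⟩, ?_⟩
      rintro Q ⟨hQ, hIQ⟩ hle
      obtain ⟨d', hd', hle'⟩ := hmin Q hQ hIQ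
      have := hanti d' hd' d hd (hle'.trans hle)
      exact this ▸ hle'
  have hinj : Set.InjOn P D := fun d hd d' hd' h => hanti d hd d' hd' h.le
  rw [heq, hinj.ncard_image, Set.ncard_coe_finset]

/-- If `k = 0` or `k ≤ r - 2`, the components are indexed by the integers `d` with
`(n + 1) / (k + 1) ≤ d ≤ n + 1`. -/
theorem ncard_minimalPrimes_jetIdeal {k : ℕ} (hkr : k < r) (hrs : r ≤ s) (hk : k = 0 ∨ k + 2 ≤ r) :
    (jetIdeal r s n k).minimalPrimes.ncard = n + 2 - (n + 1 + k) / (k + 1) := by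
  have hD : ∀ d, (n + 1 + k) / (k + 1) ≤ d ↔ n + 1 ≤ (k + 1) * d := by
    intro d
    rw [← Nat.lt_succ_iff, Nat.div_lt_iff_lt_mul (by omega), Nat.succ_mul, mul_comm]
    omega
  have hex : ∀ d, ∃ b : Fin k → ℕ, d ∈ Finset.Icc ((n + 1 + k) / (k + 1)) (n + 1) →
      Canon d b ∧ ∑ i, b i = n + 1 - d := by
    intro d
    by_cases hd : d ∈ Finset.Icc ((n + 1 + k) / (k + 1)) (n + 1)
    · rw [Finset.mem_Icc, hD, add_mul] at hd
      obtain ⟨b, hb⟩ := exists_canon k d (n + 1 - d) (by omega)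
      exact ⟨b, fun _ => hb⟩
    · exact ⟨0, fun h => absurd h hd⟩
  choose b hb using hex
  rw [ncard_minimalPrimes_eq _ (Finset.Icc ((n + 1 + k) / (k + 1)) (n + 1))
    (fun d => famIdeal r s n (b d) d) (fun d _ => famIdeal_isPrime _ _), Nat.card_Icc]
  · intro d hd
    obtain ⟨hb1, hb2⟩ := hb d hd
    rw [Finset.mem_Icc] at hd
    exact jetIdeal_le_famIdeal (δ := 1) hb1.1 hd.2 (by simp) (by omega)
  · intro x hx
    obtain ⟨d, a, h1, h2, h3, h4, h5⟩ := exists_famIdeal_le hkr hx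
    have hd : d ∈ Finset.Icc ((n + 1 + k) / (k + 1)) (n + 1) :=
      Finset.mem_Icc.2 ⟨(hD d).2 h1, h2⟩
    obtain ⟨hb1, hb2⟩ := hb d hd
    exact ⟨d, hd, (famIdeal_canon_le h3 hb1 (h4.trans hb2.symm)).trans h5⟩
  · intro d hd d' hd' hle
    obtain ⟨hb1, hb2⟩ := hb d hd
    obtain ⟨hb1', hb2'⟩ := hb d' hd'
    rw [Finset.mem_Icc] at hd hd'
    rcases hk with rfl | hk
    · simp at hd hd'
      omega
    · rcases lt_trichotomy d d' with hlt | heq | hgt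
      · exact absurd hle (not_famIdeal_le_of_lt hkr.le hrs hb1.1 hlt hd'.2 hb2 hb2')
      · exact heq
      · exact absurd hle (not_famIdeal_le_of_gt hk hrs hb1'.1 hb1.1 hgt hd.2 hb2' hb2)

theorem ncard_minimalPrimes_jetIdeal_of_eq {k : ℕ} (hkr : k + 1 = r) :
    (jetIdeal r s n k).minimalPrimes.ncard = 1 := by
  obtain ⟨b, hb1, hb2⟩ := exists_canon (k + 1) (n + 1) (n + 1) (Nat.le_mul_of_pos_left _ (by omega))
  rw [ncard_minimalPrimes_eq _ {0} (fun _ => famIdeal r s n b (n + 1))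
    (fun d _ => famIdeal_isPrime _ _), Finset.card_singleton]
  · intro d _
    exact jetIdeal_le_famIdeal (δ := 0) hb1.1 le_rfl (by simp) (by omega)
  · intro x hx
    obtain ⟨a, h1, h2⟩ := exists_famIdeal_le_of_eq hkr hx
    refine ⟨0, by simp, (famIdeal_canon_le (fun i => ?_) hb1 (h1.trans hb2.symm)).trans h2⟩
    rw [← h1]
    exact Finset.single_le_sum (fun _ _ => Nat.zero_le _) (Finset.mem_univ i)
  · intro d hd d' hd' _
    simp only [Finset.mem_singleton] at hd hd'
    omega

end JetAux

/-- If `k = 0` or `k = r-1`, the `n`-th jet scheme of the determinantal variety of rank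
at most `k` is irreducible (the jet ideal has exactly one minimal prime); if
`0 < k < r-1`, the number of its irreducible components (minimal primes of the jet
ideal) is `n + 2 - ⌈(n+1)/(k+1)⌉`. -/
theorem stmt13 (r s n k : ℕ) (hr : 1 ≤ r) (hrs : r ≤ s) (hk : k ≤ r - 1) :
    ((k = 0 ∨ k = r - 1) → (jetIdeal r s n k).minimalPrimes.ncard = 1) ∧
    (0 < k → k < r - 1 →
      (jetIdeal r s n k).minimalPrimes.ncard = n + 2 - (n + 1 + k) / (k + 1)) := by
  refine ⟨?_, fun h0 h1 => ncard_minimalPrimes_jetIdeal (by omega) hrs (Or.inr (by omega))⟩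
  by_cases h : k = r - 1
  · exact fun _ => ncard_minimalPrimes_jetIdeal_of_eq (by omega)
  · intro h'
    have h0 : k = 0 := h'.resolve_right h
    subst h0
    rw [ncard_minimalPrimes_jetIdeal (by omega) hrs (Or.inl rfl)]
    simp
end

section
/- Let λ = (λ_1 ≥ ⋯ ≥ λ_r) be a partition (a nonincreasing sequence of nonnegative integers) with λ_1 ≤ n. The set V = {(g, h) : g an r × r matrix over R_n, h an s × s matrix over R_n, g·δ_λ^{(n)} = δ_λ^{(n)}·h} is a ℂ-linear subspace of the space of all pairs of such matrices, and its ℂ-codimension in that space equals (n+1)rs − ∑_{i=1}^r λ_i(s − r + 2i − 1); equivalently, dim_ℂ V = (n+1)(r² + s²) − (n+1)rs + ∑_{i=1}^r λ_i(s − r + 2i − 1). -/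
/-- The class of `X` in `R_n`. -/
noncomputable def xbar (n : ℕ) : Rn n := Ideal.Quotient.mk _ (Polynomial.X : Polynomial ℂ)

/-- The ideal `(X ^ k)` of `R_n`, as a ℂ-subspace. -/
noncomputable def idealX (n k : ℕ) : Submodule ℂ (Rn n) :=
  (Ideal.span {xbar n ^ k}).restrictScalars ℂ

lemma mem_idealX {n k : ℕ} {x : Rn n} : x ∈ idealX n k ↔ ∃ a, x = xbar n ^ k * a := by
  simp [idealX, Ideal.mem_span_singleton, dvd_def]

lemma finrank_polyQuot (k : ℕ) : Module.finrank ℂ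
    (Polynomial ℂ ⧸ Ideal.span {(Polynomial.X : Polynomial ℂ) ^ k}) = k := by
  rw [finrank_quotient_span_eq_natDegree, Polynomial.natDegree_X_pow]

instance finite_Rn (n : ℕ) : Module.Finite ℂ (Rn n) :=
  Module.finite_of_finrank_pos (by rw [finrank_polyQuot]; omega)

lemma finrank_quot_idealX {n k : ℕ} (hk : k ≤ n + 1) :
    Module.finrank ℂ (Rn n ⧸ idealX n k) = k := by
  have hle : Ideal.span {(Polynomial.X : Polynomial ℂ) ^ (n + 1)}
      ≤ Ideal.span {(Polynomial.X : Polynomial ℂ) ^ k} := by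
    rw [Ideal.span_singleton_le_span_singleton]
    exact pow_dvd_pow _ hk
  have hmap : Ideal.span {xbar n ^ k} = Ideal.map
      (Ideal.Quotient.mkₐ ℂ (Ideal.span {(Polynomial.X : Polynomial ℂ) ^ (n + 1)}))
      (Ideal.span {(Polynomial.X : Polynomial ℂ) ^ k}) := by
    rw [Ideal.map_span]
    simp [xbar]
  have e1 := (Submodule.Quotient.restrictScalarsEquiv ℂ (Ideal.span {xbar n ^ k})).finrank_eq
  have e2 := (DoubleQuot.quotQuotEquivQuotOfLEₐ ℂ hle).toLinearEquiv.finrank_eq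
  rw [← hmap, finrank_polyQuot] at e2
  exact e1.trans e2

/-- The exponent `μ_ij`: the `(i, j)` entries of the matrices `g δ - δ h` are exactly the
multiples of `X ^ μ_ij`. -/
def muExp {d r : ℕ} (lam : Fin r → ℕ) (i : Fin r) (j : Fin (d + r)) : ℕ :=
  Fin.addCases (fun _ => lam i) (fun k => min (lam i) (lam k)) j

lemma sum_min {r : ℕ} (lam : Fin r → ℕ) (h : Antitone lam) :
    ∑ i, ∑ k, min (lam i) (lam k) = ∑ i : Fin r, lam i * (2 * (i : ℕ) + 1) := by
  induction r with
  | zero => simp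
  | succ r ih =>
    have h1 := ih (fun i => lam i.castSucc) (fun a b hab => h (by simpa using hab))
    have h2 : ∀ i, min (lam i) (lam (Fin.last r)) = lam (Fin.last r) :=
      fun i => min_eq_right (h (Fin.le_last i))
    have h3 : ∀ i, min (lam (Fin.last r)) (lam i) = lam (Fin.last r) :=
      fun i => min_eq_left (h (Fin.le_last i))
    simp only [Fin.sum_univ_castSucc, Finset.sum_add_distrib, h1, h2, h3]
    simp
    ring

lemma sum_muExp {d r : ℕ} (lam : Fin r → ℕ) (h : Antitone lam) :
    ∑ p : Fin r × Fin (d + r), muExp lam p.1 p.2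
      = ∑ i : Fin r, lam i * (d + 2 * (i : ℕ) + 1) := by
  rw [Fintype.sum_prod_type]
  simp only [muExp, Fin.sum_univ_add, Fin.addCases_left, Fin.addCases_right,
    Finset.sum_add_distrib, sum_min lam h]
  rw [← Finset.sum_add_distrib]
  refine Finset.sum_congr rfl fun i _ => ?_
  simp
  ring

lemma deltaN_castAdd {d r n : ℕ} (lam : Fin r → ℕ) (i : Fin r) (j : Fin d) :
    deltaN r (d + r) n lam i (Fin.castAdd r j) = 0 := by
  have : (j : ℕ) ≠ d + i := by omega
  simp [deltaN, this]

lemma deltaN_natAdd {d r n : ℕ} (lam : Fin r → ℕ) (i k : Fin r) :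
    deltaN r (d + r) n lam i (Fin.natAdd d k) = if k = i then xbar n ^ lam i else 0 := by
  simp [deltaN, xbar, Fin.ext_iff]

lemma mul_deltaN_castAdd {d r n : ℕ} (lam : Fin r → ℕ) (g : Matrix (Fin r) (Fin r) (Rn n))
    (i : Fin r) (j : Fin d) :
    (g * deltaN r (d + r) n lam) i (Fin.castAdd r j) = 0 := by
  simp [Matrix.mul_apply, deltaN_castAdd]

lemma mul_deltaN_natAdd {d r n : ℕ} (lam : Fin r → ℕ) (g : Matrix (Fin r) (Fin r) (Rn n))
    (i k : Fin r) :
    (g * deltaN r (d + r) n lam) i (Fin.natAdd d k) = xbar n ^ lam k * g i k := by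
  simp [Matrix.mul_apply, deltaN_natAdd, mul_comm]

lemma deltaN_mul {d r n : ℕ} (lam : Fin r → ℕ)
    (h : Matrix (Fin (d + r)) (Fin (d + r)) (Rn n)) (i : Fin r) (j : Fin (d + r)) :
    (deltaN r (d + r) n lam * h) i j = xbar n ^ lam i * h (Fin.natAdd d i) j := by
  simp [Matrix.mul_apply, Fin.sum_univ_add, deltaN_castAdd, deltaN_natAdd]

/-- The map `(g, h) ↦ g δ - δ h`, with the target matrices written as functions of pairs of
indices. -/
noncomputable def commMap (d r n : ℕ) (lam : Fin r → ℕ) :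
    (Matrix (Fin r) (Fin r) (Rn n) × Matrix (Fin (d + r)) (Fin (d + r)) (Rn n)) →ₗ[ℂ]
      (Fin r × Fin (d + r) → Rn n) where
  toFun p q := (p.1 * deltaN r (d + r) n lam - deltaN r (d + r) n lam * p.2) q.1 q.2
  map_add' p p' := by
    ext q
    simp [Matrix.add_mul, Matrix.mul_add]
    ring
  map_smul' c p := by
    ext q
    simp [smul_sub]

lemma range_commMap (d r n : ℕ) (lam : Fin r → ℕ) :
    LinearMap.range (commMap d r n lam)
      = Submodule.pi Set.univ (fun q => idealX n (muExp lam q.1 q.2)) := by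
  ext M
  rw [Submodule.mem_pi]
  constructor
  · rintro ⟨⟨g, h⟩, rfl⟩ ⟨i, j⟩ -
    simp only [commMap, LinearMap.coe_mk, AddHom.coe_mk, Matrix.sub_apply, deltaN_mul]
    induction j using Fin.addCases with
    | left j =>
      rw [mul_deltaN_castAdd, mem_idealX]
      exact ⟨-h (Fin.natAdd d i) (Fin.castAdd r j), by simp only [muExp, Fin.addCases_left]; ring⟩
    | right k =>
      rw [mul_deltaN_natAdd]
      simp only [muExp, Fin.addCases_right]
      refine Submodule.sub_mem _ ?_ ?_
      · rw [idealX, Submodule.restrictScalars_mem, Ideal.mem_span_singleton]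
        exact (pow_dvd_pow _ (min_le_right _ _)).mul_right _
      · rw [idealX, Submodule.restrictScalars_mem, Ideal.mem_span_singleton]
        exact (pow_dvd_pow _ (min_le_left _ _)).mul_right _
  · intro hM
    choose a ha using fun q => mem_idealX.1 (hM q (Set.mem_univ q))
    -- The entry `(i, d + k)` is produced by `g` when `λ_k ≤ λ_i`, every other entry by `h`.
    refine ⟨(Matrix.of fun i k => if lam k ≤ lam i then a (i, Fin.natAdd d k) else 0,
      Matrix.of fun l j => Fin.addCases (fun _ => 0) (fun i => Fin.addCases
        (fun b => -a (i, Fin.castAdd r b))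
        (fun k => if lam k ≤ lam i then 0 else -a (i, Fin.natAdd d k)) j) l), ?_⟩
    ext ⟨i, j⟩
    rw [ha]
    simp only [commMap, LinearMap.coe_mk, AddHom.coe_mk, Matrix.sub_apply, deltaN_mul]
    induction j using Fin.addCases with
    | left j =>
      rw [mul_deltaN_castAdd]
      simp [muExp]
      ring
    | right k =>
      rw [mul_deltaN_natAdd]
      by_cases hk : lam k ≤ lam i
      · simp [muExp, hk]
      · simp [muExp, hk, min_eq_left (not_le.1 hk).le]
        ring

/-- The set `V = {(g,h) : g δ_λ^{(n)} = δ_λ^{(n)} h}` is a ℂ-linear subspace of the space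
of pairs of an `r × r` and an `s × s` matrix over `R_n` (of ℂ-dimension `(n+1)(r²+s²)`),
and its ℂ-dimension equals `(n+1)(r²+s²) - (n+1)rs + ∑_{i=1}^r λ_i(s-r+2i-1)`,
i.e. its ℂ-codimension is `(n+1)rs - ∑_{i=1}^r λ_i(s-r+2i-1)`. -/
theorem stmt14 (r s n : ℕ) (hr : 1 ≤ r) (hrs : r ≤ s)
    (lam : Fin r → ℕ) (hlam : Antitone lam) (hn : ∀ i, lam i ≤ n) :
    ∃ V : Submodule ℂ (Matrix (Fin r) (Fin r) (Rn n) × Matrix (Fin s) (Fin s) (Rn n)),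
      (V : Set (Matrix (Fin r) (Fin r) (Rn n) × Matrix (Fin s) (Fin s) (Rn n)))
          = {p | p.1 * deltaN r s n lam = deltaN r s n lam * p.2} ∧
      Module.finrank ℂ V
        = (n + 1) * (r ^ 2 + s ^ 2) - (n + 1) * (r * s)
            + ∑ i : Fin r, lam i * (s - r + 2 * (i : ℕ) + 1) := by
  obtain ⟨d, rfl⟩ := Nat.exists_eq_add_of_le' hrs
  refine ⟨LinearMap.ker (commMap d r n lam), ?_, ?_⟩
  · ext p
    simp only [SetLike.mem_coe, LinearMap.mem_ker, Set.mem_ofPred_eq]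
    rw [← sub_eq_zero (a := p.1 * _)]
    constructor
    · intro h
      ext i j
      exact congrFun h (i, j)
    · intro h
      ext q
      exact congrFun (congrFun h q.1) q.2
  · have hmu : ∀ q : Fin r × Fin (d + r), muExp lam q.1 q.2 ≤ n + 1 := by
      rintro ⟨i, j⟩
      have := hn i
      induction j using Fin.addCases <;> simp [muExp] <;> omega
    have hnull := LinearMap.finrank_range_add_finrank_ker (commMap d r n lam)
    have hquot := Submodule.finrank_quotient_add_finrank (LinearMap.range (commMap d r n lam))
    have hcoker : Module.finrank ℂ
        ((Fin r × Fin (d + r) → Rn n) ⧸ LinearMap.range (commMap d r n lam))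
          = ∑ i : Fin r, lam i * (d + 2 * (i : ℕ) + 1) := by
      have hfree : ∀ q : Fin r × Fin (d + r),
          Module.Free ℂ (Rn n ⧸ idealX n (muExp lam q.1 q.2)) :=
        fun q => Module.Free.of_divisionRing _ _
      rw [range_commMap, (Submodule.quotientPi _).finrank_eq, Module.finrank_pi_fintype,
        ← sum_muExp lam hlam]
      exact Finset.sum_congr rfl fun q _ => finrank_quot_idealX (hmu q)
    have hR : Module.finrank ℂ (Rn n) = n + 1 := finrank_polyQuot (n + 1)
    rw [hcoker, Module.finrank_pi_fintype] at hquot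
    rw [Module.finrank_prod, Module.finrank_matrix, Module.finrank_matrix] at hnull
    simp only [hR, Finset.sum_const, Finset.card_univ, Fintype.card_prod, Fintype.card_fin,
      smul_eq_mul] at hquot hnull
    have hle : (n + 1) * (r * (d + r)) ≤ (n + 1) * (r ^ 2 + (d + r) ^ 2) :=
      Nat.mul_le_mul_left _ (by nlinarith)
    rw [Nat.add_sub_cancel]
    zify [hle] at *
    linarith
end

section
/- Let λ = (λ_1 ≥ ⋯ ≥ λ_r) be a partition (a nonincreasing sequence of nonnegative integers) with λ_1 ≤ n. Then the Krull dimension of the quotient of the polynomial ring ℂ[x_{i,j,l} : (i,j,l) ∈ I_n] by the vanishing ideal of the orbit O_λ^{(n)} equals (n+1)rs − ∑_{i=1}^r λ_i(s − r + 2i − 1); that is, the Zariski closure of the orbit of δ_λ^{(n)} has codimension ∑_{i=1}^r λ_i(s − r + 2i − 1) in the affine space ℂ^{(n+1)rs}. -/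
/-- The matrix over `R_n` whose `(i,j)` entry is `∑_{l=0}^n x(i,j,l) X^l`; thus
`x = c_n(A)` in the notation of the paper. -/
noncomputable def matOfPointN (r s n : ℕ) (x : Fin r × Fin s × Fin (n + 1) → ℂ) :
    Matrix (Fin r) (Fin s) (Rn n) :=
  Matrix.of fun i j => Ideal.Quotient.mk _
    (∑ l : Fin (n + 1), Polynomial.C (x (i, j, l)) * Polynomial.X ^ (l : ℕ))

/-- The vanishing ideal of a subset `T ⊆ ℂ^{I_n}`: all polynomials in the coordinates
vanishing identically on `T`. -/
noncomputable def vanIdeal {ι : Type} (T : Set (ι → ℂ)) : Ideal (MvPolynomial ι ℂ) where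
  carrier := {p | ∀ x ∈ T, MvPolynomial.eval x p = 0}
  add_mem' := fun {a b} ha hb x hx => by rw [map_add, ha x hx, hb x hx, add_zero]
  zero_mem' := fun x _ => map_zero _
  smul_mem' := fun c p hp x hx => by rw [smul_eq_mul, map_mul, hp x hx, mul_zero]

/-! ### Krull dimension -/

section KrullDimension

open Order

/-- Incomparability gives `≤`; lying over and going up give `≥`. -/
theorem ringKrullDim_eq_of_isIntegral_of_injective {R S : Type} [CommRing R] [CommRing S]
    [Algebra R S] [Algebra.IsIntegral R S] (hinj : Function.Injective (algebraMap R S)) :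
    ringKrullDim S = ringKrullDim R := by
  apply le_antisymm
  · refine krullDim_le_of_strictMono
      (fun P : PrimeSpectrum S => PrimeSpectrum.comap (algebraMap R S) P) ?_
    intro P Q hPQ
    exact Ideal.IsIntegral.comap_lt_comap (R := R) (I := P.asIdeal) (J := Q.asIdeal) hPQ
  · refine iSup_le fun l => ?_
    have : FaithfulSMul R S := (faithfulSMul_iff_algebraMap_injective R S).mpr hinj
    obtain ⟨⟨P, hP, hPl⟩⟩ := Ideal.nonempty_primesOver (S := S) l.head.asIdeal
    obtain ⟨L, hL, -, -⟩ := Ideal.exists_ltSeries_of_hasGoingUp l P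
    rw [← hL]
    exact LTSeries.length_le_krullDim L

/-- A finitely generated `ℂ`-algebra that contains a polynomial ring in `σ` variables and embeds into
such a ring has Krull dimension `#σ`: both embeddings compare transcendence degrees, and Noether
normalization identifies the transcendence degree with the Krull dimension. -/
theorem ringKrullDim_eq_card_of_injective {Q σ : Type} [CommRing Q] [Algebra ℂ Q]
    [Algebra.FiniteType ℂ Q] [Fintype σ]
    (f : MvPolynomial σ ℂ →ₐ[ℂ] Q) (hf : Function.Injective f)
    (g : Q →ₐ[ℂ] MvPolynomial σ ℂ) (hg : Function.Injective g) :
    ringKrullDim Q = (Fintype.card σ : ℕ) := by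
  have : IsDomain Q := hg.isDomain g.toRingHom
  obtain ⟨e, t, ht, hti⟩ := exists_integral_inj_algHom_of_fg ℂ Q
  have hdim : ringKrullDim Q = e := by
    let := t.toRingHom.toAlgebra
    have : Algebra.IsIntegral (MvPolynomial (Fin e) ℂ) Q := ⟨hti⟩
    rw [ringKrullDim_eq_of_isIntegral_of_injective (R := MvPolynomial (Fin e) ℂ) ht,
      MvPolynomial.ringKrullDim_of_isNoetherianRing, ringKrullDim_eq_zero_of_field]
    simp
  have htr : Algebra.trdeg ℂ Q = e := by
    let := t.toRingHom.toAlgebra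
    have : IsScalarTower ℂ (MvPolynomial (Fin e) ℂ) Q :=
      IsScalarTower.of_algebraMap_eq fun x => (t.commutes x).symm
    have : Algebra.IsIntegral (MvPolynomial (Fin e) ℂ) Q := ⟨hti⟩
    have : FaithfulSMul (MvPolynomial (Fin e) ℂ) Q :=
      (faithfulSMul_iff_algebraMap_injective _ _).mpr ht
    have := trdeg_add_eq ℂ (MvPolynomial (Fin e) ℂ) (A := Q)
    rw [← this, MvPolynomial.trdeg_of_isDomain,
      trdeg_eq_zero (R := MvPolynomial (Fin e) ℂ) (A := Q)]
    simp
  have h1 := trdeg_le_of_injective f hf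
  have h2 := trdeg_le_of_injective g hg
  have h3 := le_antisymm h1 h2
  rw [htr, MvPolynomial.trdeg_of_isDomain] at h3
  have h4 : Fintype.card σ = e := by
    simpa using h3
  rw [hdim, h4]

end KrullDimension

/-! ### Zariski density from the inverse function theorem -/

section Density

open Topology Filter MvPolynomial

theorem MvPolynomial.eq_zero_of_eventually_eval_eq_zero {σ : Type} [Fintype σ]
    (p : MvPolynomial σ ℂ) (x₀ : σ → ℂ) (h : ∀ᶠ x in 𝓝 x₀, eval x p = 0) : p = 0 := by
  obtain ⟨ε, hε, hb⟩ := Metric.eventually_nhds_iff_ball.mp h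
  refine MvPolynomial.funext_set (fun i => Metric.ball (x₀ i) ε)
    (fun i => infinite_of_mem_nhds (x₀ i) (Metric.ball_mem_nhds _ hε)) fun x hx => ?_
  rw [map_zero]
  apply hb
  rw [ball_pi _ hε]
  exact hx

/-- If `x ↦ B (a₀ + A x) (b₀ + C x)` has surjective derivative at `0`, then it is open at `0`, so a
polynomial vanishing on the image of a neighbourhood of `0` is zero. -/
theorem bilinear_dominant {α β σ W : Type} [Fintype α] [Fintype β] [Fintype σ] [Fintype W]
    (B : (α → ℂ) →ₗ[ℂ] (β → ℂ) →ₗ[ℂ] (σ → ℂ))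
    (A : (W → ℂ) →ₗ[ℂ] (α → ℂ)) (C : (W → ℂ) →ₗ[ℂ] (β → ℂ)) (a₀ : α → ℂ) (b₀ : β → ℂ)
    (hsurj : ∀ z, ∃ x, B a₀ (C x) + B (A x) b₀ = z) (p : MvPolynomial σ ℂ)
    (h : ∀ᶠ x in 𝓝 (0 : W → ℂ), eval (B (a₀ + A x) (b₀ + C x)) p = 0) : p = 0 := by
  let A' := A.toContinuousLinearMap
  let C' := C.toContinuousLinearMap
  let B' := B.toContinuousBilinearMap
  have hA : HasStrictFDerivAt (fun x => a₀ + A x) A' 0 := A'.hasStrictFDerivAt.const_add a₀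
  have hC : HasStrictFDerivAt (fun x => b₀ + C x) C' 0 := C'.hasStrictFDerivAt.const_add b₀
  have hB := B'.hasStrictFDerivAt_of_bilinear hA hC
  have hmap := hB.map_nhds_eq_of_surj (by
    rw [LinearMap.range_eq_top]
    intro z
    obtain ⟨x, hx⟩ := hsurj z
    refine ⟨x, ?_⟩
    rw [← hx]
    simp [B', A', C'])
  refine eq_zero_of_eventually_eval_eq_zero p (B' (a₀ + A 0) (b₀ + C 0)) ?_
  rw [← hmap, eventually_map]
  exact h

/-- The comorphism of the polynomial map `y ↦ B (a₀ + A y) (b₀ + C y)`. -/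
theorem exists_algHom_bilinear {α β σ W : Type} [Fintype α] [Fintype β] [Fintype σ] [Fintype W]
    (B : (α → ℂ) →ₗ[ℂ] (β → ℂ) →ₗ[ℂ] (σ → ℂ))
    (A : (W → ℂ) →ₗ[ℂ] (α → ℂ)) (C : (W → ℂ) →ₗ[ℂ] (β → ℂ)) (a₀ : α → ℂ) (b₀ : β → ℂ) :
    ∃ Φ : MvPolynomial σ ℂ →ₐ[ℂ] MvPolynomial W ℂ,
      ∀ p y, eval y (Φ p) = eval (B (a₀ + A y) (b₀ + C y)) p := by
  classical
  have lin : ∀ {γ : Type} [Fintype γ] (T : (W → ℂ) →ₗ[ℂ] (γ → ℂ)) (i : γ),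
      ∃ q : MvPolynomial W ℂ, ∀ y, eval y q = T y i := by
    intro γ _ T i
    refine ⟨∑ w, MvPolynomial.C (T (fun v => if w = v then 1 else 0) i) * X w, fun y => ?_⟩
    rw [LinearMap.pi_apply_eq_sum_univ T y]
    simp only [map_sum, map_mul, eval_C, eval_X, Finset.sum_apply, Pi.smul_apply, smul_eq_mul]
    exact Finset.sum_congr rfl fun w _ => mul_comm _ _
  choose qa hqa using fun i => lin A i
  choose qb hqb using fun i => lin C i
  let e : ∀ {γ : Type}, γ → γ → ℂ := fun i j => if i = j then 1 else 0
  have key : ∀ (a : α → ℂ) (b : β → ℂ) (t : σ),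
      B a b t = ∑ i, ∑ j, B (e i) (e j) t * a i * b j := by
    intro a b t
    rw [LinearMap.pi_apply_eq_sum_univ B a, LinearMap.sum_apply, Finset.sum_apply]
    refine Finset.sum_congr rfl fun i _ => ?_
    rw [LinearMap.smul_apply, LinearMap.pi_apply_eq_sum_univ (B _) b, Pi.smul_apply,
      Finset.sum_apply, smul_eq_mul, Finset.mul_sum]
    refine Finset.sum_congr rfl fun j _ => ?_
    rw [Pi.smul_apply, smul_eq_mul]
    ring
  refine ⟨aeval fun t => ∑ i, ∑ j, MvPolynomial.C (B (e i) (e j) t) *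
    (MvPolynomial.C (a₀ i) + qa i) * (MvPolynomial.C (b₀ j) + qb j), fun p y => ?_⟩
  rw [← coe_aeval_eq_eval, ← coe_aeval_eq_eval, RingHom.coe_coe, RingHom.coe_coe,
    ← AlgHom.comp_apply]
  congr 1
  ext t
  rw [AlgHom.comp_apply, aeval_X, aeval_X, key]
  simp [hqa, hqb, aeval_eq_eval]

end Density

/-! ### Coordinates on matrices over `ℂ[X]/(X^{n+1})` -/

section Coordinates

open Topology Filter Polynomial

theorem coeff_sum_C_mul_X_pow {n : ℕ} (x : Fin (n + 1) → ℂ) (l : Fin (n + 1)) :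
    (∑ k : Fin (n + 1), C (x k) * X ^ (k : ℕ) : ℂ[X]).coeff l = x l := by
  simp [Polynomial.coeff_X_pow, Fin.val_inj]

/-- The linear isomorphism `ℂ^{n+1} ≃ R_n` given by the basis `1, X, …, X^n`. -/
noncomputable def rnEquiv (n : ℕ) : (Fin (n + 1) → ℂ) ≃ₗ[ℂ] Rn n :=
  LinearEquiv.ofBijective
    { toFun := fun x => Ideal.Quotient.mk _ (∑ l : Fin (n + 1), C (x l) * X ^ (l : ℕ))
      map_add' := fun x y => by
        rw [← map_add, ← Finset.sum_add_distrib]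
        simp [add_mul]
      map_smul' := fun c x => by
        rw [RingHom.id_apply, Algebra.smul_def (A := Rn n), ← Ideal.Quotient.mk_algebraMap,
          ← map_mul, Finset.mul_sum]
        simp [mul_assoc, Polynomial.algebraMap_eq] }
    (by
      constructor
      · rw [← LinearMap.ker_eq_bot, LinearMap.ker_eq_bot']
        intro x hx
        change Ideal.Quotient.mk _ _ = 0 at hx
        rw [Ideal.Quotient.eq_zero_iff_mem, Ideal.mem_span_singleton, X_pow_dvd_iff] at hx
        ext l
        rw [← coeff_sum_C_mul_X_pow x l, hx l l.2]
        rfl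
      · intro q
        obtain ⟨p, rfl⟩ := Ideal.Quotient.mk_surjective q
        refine ⟨fun l => p.coeff l, ?_⟩
        change Ideal.Quotient.mk _ _ = _
        rw [Ideal.Quotient.eq, Ideal.mem_span_singleton, X_pow_dvd_iff]
        intro d hd
        have := coeff_sum_C_mul_X_pow (fun l => p.coeff l) ⟨d, hd⟩
        rw [coeff_sub, this, sub_self])

/-- The coefficient of `X^l` of an element of `R_n`. -/
noncomputable def rnCoeff {n : ℕ} (q : Rn n) (l : Fin (n + 1)) : ℂ := (rnEquiv n).symm q l

theorem rnCoeff_mk {n : ℕ} (p : ℂ[X]) (l : Fin (n + 1)) :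
    rnCoeff (Ideal.Quotient.mk _ p : Rn n) l = p.coeff l := by
  have : rnEquiv n (fun l => p.coeff l) = Ideal.Quotient.mk _ p := by
    change Ideal.Quotient.mk _ _ = _
    rw [Ideal.Quotient.eq, Ideal.mem_span_singleton, X_pow_dvd_iff]
    intro d hd
    have := coeff_sum_C_mul_X_pow (fun l => p.coeff l) ⟨d, hd⟩
    rw [coeff_sub, this, sub_self]
  rw [rnCoeff, ← this, LinearEquiv.symm_apply_apply]

theorem rn_ext {n : ℕ} {p q : Rn n} (h : ∀ l, rnCoeff p l = rnCoeff q l) : p = q :=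
  (rnEquiv n).symm.injective (funext h)

@[simp] theorem rnCoeff_zero {n : ℕ} (l : Fin (n + 1)) : rnCoeff (0 : Rn n) l = 0 := by
  simp [rnCoeff]

@[simp] theorem rnCoeff_add {n : ℕ} (p q : Rn n) (l : Fin (n + 1)) :
    rnCoeff (p + q) l = rnCoeff p l + rnCoeff q l := by
  simp [rnCoeff]

/-- The class of `X` in `R_n`. -/
noncomputable abbrev rnX (n : ℕ) : Rn n := Ideal.Quotient.mk _ (X : ℂ[X])

theorem rnCoeff_X_pow_mul {n : ℕ} (m : ℕ) (q : Rn n) (l : Fin (n + 1)) :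
    rnCoeff (rnX n ^ m * q) l =
      if m ≤ (l : ℕ) then rnCoeff q ⟨l - m, lt_of_le_of_lt (Nat.sub_le _ _) l.2⟩ else 0 := by
  obtain ⟨p, rfl⟩ := Ideal.Quotient.mk_surjective q
  rw [rnX, ← map_pow, ← map_mul, rnCoeff_mk, rnCoeff_mk, coeff_X_pow_mul']

/-- Coordinates on the space of `a × b` matrices over `R_n`; the inverse of `matOfPointN`. -/
noncomputable def matCoord (a b n : ℕ) :
    Matrix (Fin a) (Fin b) (Rn n) ≃ₗ[ℂ] (Fin a × Fin b × Fin (n + 1) → ℂ) where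
  toFun M := fun t => rnCoeff (M t.1 t.2.1) t.2.2
  invFun := matOfPointN a b n
  map_add' M N := by ext t; simp
  map_smul' c M := by ext t; simp [rnCoeff]
  left_inv M := by
    ext i j
    exact (rnEquiv n).apply_symm_apply (M i j)
  right_inv x := by
    ext ⟨i, j, l⟩
    exact congrFun ((rnEquiv n).symm_apply_apply fun l => x (i, j, l)) l

theorem matCoord_apply {a b n : ℕ} (M : Matrix (Fin a) (Fin b) (Rn n))
    (t : Fin a × Fin b × Fin (n + 1)) : matCoord a b n M t = rnCoeff (M t.1 t.2.1) t.2.2 := rfl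

theorem matCoord_symm_apply {a b n : ℕ} (x : Fin a × Fin b × Fin (n + 1) → ℂ) :
    (matCoord a b n).symm x = matOfPointN a b n x := rfl

theorem rnCoeff_symm {a b n : ℕ} (x : Fin a × Fin b × Fin (n + 1) → ℂ) (i : Fin a) (j : Fin b)
    (l : Fin (n + 1)) : rnCoeff ((matCoord a b n).symm x i j) l = x (i, j, l) :=
  congrFun ((matCoord a b n).apply_symm_apply x) (i, j, l)

/-- Reduction modulo `X`, that is, the constant coefficient. -/
noncomputable def rnEv (n : ℕ) : Rn n →+* ℂ :=
  Ideal.Quotient.lift _ (Polynomial.constantCoeff : ℂ[X] →+* ℂ) (by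
    intro a ha
    obtain ⟨b, rfl⟩ := Ideal.mem_span_singleton.mp ha
    simp)

theorem rnEv_eq {n : ℕ} (q : Rn n) : rnEv n q = rnCoeff q 0 := by
  obtain ⟨p, rfl⟩ := Ideal.Quotient.mk_surjective q
  rw [rnCoeff_mk]
  rfl

theorem rn_isUnit {n : ℕ} (q : Rn n) (h : rnEv n q ≠ 0) : IsUnit q := by
  obtain ⟨p, rfl⟩ := Ideal.Quotient.mk_surjective q
  have h : p.coeff 0 ≠ 0 := h
  have hnil : IsNilpotent (Ideal.Quotient.mk _ (p - C (p.coeff 0)) : Rn n) := by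
    refine ⟨n + 1, ?_⟩
    rw [← map_pow, Ideal.Quotient.eq_zero_iff_mem, Ideal.mem_span_singleton]
    exact pow_dvd_pow_of_dvd (X_dvd_iff.mpr (by simp)) _
  have hu : IsUnit (Ideal.Quotient.mk _ (C (p.coeff 0)) : Rn n) :=
    (isUnit_C.mpr h.isUnit).map _
  have := hnil.isUnit_add_left_of_commute hu (Commute.all _ _)
  rwa [← map_add, add_sub_cancel] at this

/-- Invertibility is an open condition on the coordinates of a square matrix over `R_n`. -/
theorem eventually_isUnit (m n : ℕ) :
    ∀ᶠ x in 𝓝 (matCoord m m n 1), IsUnit ((matCoord m m n).symm x) := by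
  have hdet : ∀ x, rnEv n ((matCoord m m n).symm x).det =
      (Matrix.of fun i j : Fin m => x (i, j, 0)).det := by
    intro x
    rw [RingHom.map_det]
    congr 1
    ext i j
    simp [rnEv_eq, rnCoeff_symm]
  have hcont : Continuous fun x : Fin m × Fin m × Fin (n + 1) → ℂ =>
      rnEv n ((matCoord m m n).symm x).det := by
    simp_rw [hdet]
    refine Continuous.matrix_det ?_
    exact continuous_matrix fun i j => continuous_apply _
  have h1 : rnEv n ((matCoord m m n).symm (matCoord m m n 1)).det ≠ 0 := by simp
  filter_upwards [hcont.continuousAt.eventually_ne h1] with x hx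
  exact (Matrix.isUnit_iff_isUnit_det _).mpr (rn_isUnit _ hx)

/-- The product `M * D * N` as a bilinear function of `M` and `N`, in coordinates. -/
noncomputable def mulCoord {a b c d : ℕ} (n : ℕ) (D : Matrix (Fin b) (Fin c) (Rn n)) :
    (Fin a × Fin b × Fin (n + 1) → ℂ) →ₗ[ℂ] (Fin c × Fin d × Fin (n + 1) → ℂ) →ₗ[ℂ]
      (Fin a × Fin d × Fin (n + 1) → ℂ) :=
  LinearMap.mk₂ ℂ
    (fun x y => matCoord a d n ((matCoord a b n).symm x * D * (matCoord c d n).symm y))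
    (fun x x' y => by simp [Matrix.add_mul])
    (fun c x y => by simp)
    (fun x y y' => by simp [Matrix.mul_add])
    (fun c x y => by simp)

theorem mulCoord_apply {a b c d n : ℕ} (D : Matrix (Fin b) (Fin c) (Rn n))
    (x : Fin a × Fin b × Fin (n + 1) → ℂ) (y : Fin c × Fin d × Fin (n + 1) → ℂ) :
    mulCoord n D x y = matCoord a d n ((matCoord a b n).symm x * D * (matCoord c d n).symm y) :=
  rfl

end Coordinates

/-! ### Gauss decomposition is dominant -/

section Gauss

open Topology Filter

/-- Polynomial identities on square matrices over `R_n` may be checked on products `U * L` with `U`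
upper triangular and `L` lower unitriangular: the derivative of
`x ↦ (1 + upper part of x) * (1 + strictly lower part of x)` at `0` is the identity. -/
theorem gauss_dominant (m n : ℕ) (q : MvPolynomial (Fin m × Fin m × Fin (n + 1)) ℂ)
    (h : ∀ U L : Matrix (Fin m) (Fin m) (Rn n), (∀ i j, j < i → U i j = 0) →
      (∀ i j, i < j → L i j = 0) → (∀ i, L i i = 1) →
      MvPolynomial.eval (matCoord m m n (U * L)) q = 0) : q = 0 := by
  let up : (Fin m × Fin m × Fin (n + 1) → ℂ) →ₗ[ℂ] (Fin m × Fin m × Fin (n + 1) → ℂ) :=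
    LinearMap.pi fun t => if t.1 ≤ t.2.1 then LinearMap.proj t else 0
  let low : (Fin m × Fin m × Fin (n + 1) → ℂ) →ₗ[ℂ] (Fin m × Fin m × Fin (n + 1) → ℂ) :=
    LinearMap.pi fun t => if t.1 ≤ t.2.1 then 0 else LinearMap.proj t
  have hup : ∀ x t, up x t = if t.1 ≤ t.2.1 then x t else 0 := by
    intro x t
    simp only [up, LinearMap.pi_apply]
    split_ifs <;> rfl
  have hlow : ∀ x t, low x t = if t.1 ≤ t.2.1 then 0 else x t := by
    intro x t
    simp only [low, LinearMap.pi_apply]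
    split_ifs <;> rfl
  refine bilinear_dominant (mulCoord n (1 : Matrix (Fin m) (Fin m) (Rn n))) up low
    (matCoord m m n 1) (matCoord m m n 1) (fun z => ⟨z, ?_⟩) q (Eventually.of_forall fun x => ?_)
  · simp only [mulCoord_apply, LinearEquiv.symm_apply_apply, mul_one, one_mul,
      LinearEquiv.apply_symm_apply]
    ext t
    rw [Pi.add_apply, hup, hlow]
    split_ifs <;> simp
  · rw [mulCoord_apply, mul_one, map_add, map_add, LinearEquiv.symm_apply_apply]
    refine h _ _ (fun i j hij => ?_) (fun i j hij => ?_) (fun i => ?_)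
    · rw [Matrix.add_apply, Matrix.one_apply_ne hij.ne', zero_add]
      refine rn_ext fun l => ?_
      rw [rnCoeff_symm, hup, if_neg (not_le.mpr hij), rnCoeff_zero]
    · rw [Matrix.add_apply, Matrix.one_apply_ne hij.ne, zero_add]
      refine rn_ext fun l => ?_
      rw [rnCoeff_symm, hlow, if_pos hij.le, rnCoeff_zero]
    · rw [Matrix.add_apply, Matrix.one_apply_eq, add_eq_left]
      refine rn_ext fun l => ?_
      rw [rnCoeff_symm, hlow, if_pos le_rfl, rnCoeff_zero]

end Gauss

/-! ### A parametrization of the orbit closure -/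

section Orbit

open Topology Filter

variable {r s n : ℕ}

/-- The column of `δ_λ` that carries the entry of row `i`. -/
def diagCol (hrs : r ≤ s) (i : Fin r) : Fin s := ⟨s - r + i, by omega⟩

/-- The row of `δ_λ` whose entry lies in column `j`, when `j` is one of the last `r` columns
(and the first row otherwise). -/
def diagRow (hr : 1 ≤ r) (hrs : r ≤ s) (j : Fin s) : Fin r := ⟨j - (s - r), by omega⟩

theorem diagRow_diagCol (hr : 1 ≤ r) (hrs : r ≤ s) (k : Fin r) :
    diagRow hr hrs (diagCol hrs k) = k := by
  ext; simp [diagRow, diagCol]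

theorem diagCol_diagRow (hr : 1 ≤ r) (hrs : r ≤ s) (j : Fin s) (h : s - r ≤ (j : ℕ)) :
    diagCol hrs (diagRow hr hrs j) = j := by
  ext; simp [diagRow, diagCol]; omega

theorem mul_deltaN_apply {a : ℕ} (hrs : r ≤ s) (lam : Fin r → ℕ)
    (M : Matrix (Fin a) (Fin r) (Rn n)) (i : Fin a) (k : Fin r) :
    (M * deltaN r s n lam) i (diagCol hrs k) = rnX n ^ lam k * M i k := by
  rw [Matrix.mul_apply, Finset.sum_eq_single k]
  · simp [deltaN, diagCol, mul_comm]
  · intro b _ hb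
    have : (k : ℕ) ≠ b := fun h => hb (Fin.ext h.symm)
    simp [deltaN, diagCol, this]
  · simp

theorem mul_deltaN_apply_of_lt {a : ℕ} (lam : Fin r → ℕ)
    (M : Matrix (Fin a) (Fin r) (Rn n)) (i : Fin a) (j : Fin s) (hj : (j : ℕ) < s - r) :
    (M * deltaN r s n lam) i j = 0 := by
  rw [Matrix.mul_apply]
  refine Finset.sum_eq_zero fun k _ => ?_
  have : (j : ℕ) ≠ s - r + k := by omega
  simp [deltaN, this]

theorem deltaN_mul_apply {b : ℕ} (hrs : r ≤ s) (lam : Fin r → ℕ)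
    (N : Matrix (Fin s) (Fin b) (Rn n)) (i : Fin r) (j : Fin b) :
    (deltaN r s n lam * N) i j = rnX n ^ lam i * N (diagCol hrs i) j := by
  rw [Matrix.mul_apply, Finset.sum_eq_single (diagCol hrs i)]
  · simp [deltaN, diagCol]
  · intro b _ hb
    have : (b : ℕ) ≠ s - r + i := fun h => hb (Fin.ext h)
    simp [deltaN, this]
  · simp

/-- A lower triangular matrix can be moved from the left of `δ_λ` to its right. -/
theorem exists_lower_comm (hr : 1 ≤ r) (hrs : r ≤ s) (lam : Fin r → ℕ) (hlam : Antitone lam)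
    (L : Matrix (Fin r) (Fin r) (Rn n)) (hL : ∀ i j, i < j → L i j = 0) :
    ∃ L' : Matrix (Fin s) (Fin s) (Rn n), L * deltaN r s n lam = deltaN r s n lam * L' := by
  refine ⟨Matrix.of fun i j => if (j : ℕ) < s - r then 0 else
    rnX n ^ (lam (diagRow hr hrs j) - lam (diagRow hr hrs i)) *
      L (diagRow hr hrs i) (diagRow hr hrs j), ?_⟩
  ext i j
  rw [deltaN_mul_apply hrs]
  by_cases hj : (j : ℕ) < s - r
  · rw [mul_deltaN_apply_of_lt _ _ _ _ hj]
    simp [hj]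
  · obtain ⟨k, rfl⟩ : ∃ k, j = diagCol hrs k :=
      ⟨_, (diagCol_diagRow hr hrs j (not_lt.mp hj)).symm⟩
    rw [mul_deltaN_apply, Matrix.of_apply, if_neg hj, diagRow_diagCol, diagRow_diagCol]
    rcases lt_or_ge i k with hik | hik
    · simp [hL i k hik]
    · rw [← mul_assoc, ← pow_add, Nat.add_sub_cancel' (hlam hik)]

/-- An upper triangular matrix can be moved from the right of `δ_λ` to its left. -/
theorem exists_upper_comm (hr : 1 ≤ r) (hrs : r ≤ s) (lam : Fin r → ℕ) (hlam : Antitone lam)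
    (U : Matrix (Fin s) (Fin s) (Rn n)) (hU : ∀ i j, j < i → U i j = 0) :
    ∃ U' : Matrix (Fin r) (Fin r) (Rn n), (∀ i j, j < i → U' i j = 0) ∧
      deltaN r s n lam * U = U' * deltaN r s n lam := by
  have hlt : ∀ {i k : Fin r}, k < i → diagCol hrs k < diagCol hrs i := by
    intro i k h
    exact Nat.add_lt_add_left (Fin.lt_def.mp h) _
  refine ⟨Matrix.of fun i k => rnX n ^ (lam i - lam k) * U (diagCol hrs i) (diagCol hrs k),
    fun i k hik => ?_, ?_⟩
  · rw [Matrix.of_apply, hU _ _ (hlt hik), mul_zero]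
  · ext i j
    rw [deltaN_mul_apply hrs]
    by_cases hj : (j : ℕ) < s - r
    · rw [mul_deltaN_apply_of_lt _ _ _ _ hj, hU, mul_zero]
      rw [Fin.lt_def]
      simp only [diagCol]
      omega
    · obtain ⟨k, rfl⟩ : ∃ k, j = diagCol hrs k :=
        ⟨_, (diagCol_diagRow hr hrs j (not_lt.mp hj)).symm⟩
      rw [mul_deltaN_apply, Matrix.of_apply]
      rcases lt_or_ge k i with hik | hik
      · rw [hU _ _ (hlt hik), mul_zero, mul_zero, mul_zero]
      · rw [← mul_assoc, ← pow_add, Nat.add_sub_cancel' (hlam hik)]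

/-- The exponent `m` such that the `(i, j)` entries of the matrices `a * δ_λ + δ_λ * b`, with `a`
upper triangular and `b` strictly lower triangular, are the multiples of `X^m`. -/
def minExp (hr : 1 ≤ r) (hrs : r ≤ s) (lam : Fin r → ℕ) (i : Fin r) (j : Fin s) : ℕ :=
  if (j : ℕ) < s - r + i then lam i else lam (diagRow hr hrs j)

theorem minExp_of_lt (hr : 1 ≤ r) (hrs : r ≤ s) (lam : Fin r → ℕ) {i : Fin r} {j : Fin s}
    (h : (j : ℕ) < s - r + i) : minExp hr hrs lam i j = lam i := if_pos h

theorem minExp_of_le (hr : 1 ≤ r) (hrs : r ≤ s) (lam : Fin r → ℕ) {i : Fin r} {j : Fin s}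
    (h : s - r + (i : ℕ) ≤ j) : minExp hr hrs lam i j = lam (diagRow hr hrs j) :=
  if_neg (not_lt.mpr h)

/-- The index set of the coordinates of the parametrizing affine space, viewed as a subset
of the coordinates of the ambient space. -/
abbrev ParamIdx (n : ℕ) (hr : 1 ≤ r) (hrs : r ≤ s) (lam : Fin r → ℕ) : Type :=
  {t : Fin r × Fin s × Fin (n + 1) // minExp hr hrs lam t.1 t.2.1 ≤ (t.2.2 : ℕ)}

/-- Extension by zero from the parametrizing coordinates to all coordinates. -/
noncomputable def paramExt (n : ℕ) (hr : 1 ≤ r) (hrs : r ≤ s) (lam : Fin r → ℕ) :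
    (ParamIdx n hr hrs lam → ℂ) →ₗ[ℂ] (Fin r × Fin s × Fin (n + 1) → ℂ) :=
  LinearMap.pi fun t =>
    if h : minExp hr hrs lam t.1 t.2.1 ≤ (t.2.2 : ℕ) then LinearMap.proj ⟨t, h⟩ else 0

theorem paramExt_apply (hr : 1 ≤ r) (hrs : r ≤ s) (lam : Fin r → ℕ)
    (y : ParamIdx n hr hrs lam → ℂ) (t : Fin r × Fin s × Fin (n + 1)) :
    paramExt n hr hrs lam y t =
      if h : minExp hr hrs lam t.1 t.2.1 ≤ (t.2.2 : ℕ) then y ⟨t, h⟩ else 0 := by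
  simp only [paramExt, LinearMap.pi_apply]
  split_ifs <;> rfl

theorem paramExt_restrict (hr : 1 ≤ r) (hrs : r ≤ s) (lam : Fin r → ℕ)
    (z : Fin r × Fin s × Fin (n + 1) → ℂ) (i : Fin r) (j : Fin s) (l : Fin (n + 1)) :
    paramExt n hr hrs lam (fun t => z t.1) (i, j, l) =
      if minExp hr hrs lam i j ≤ (l : ℕ) then z (i, j, l) else 0 := by
  rw [paramExt_apply]
  split_ifs <;> rfl

/-- The upper triangular `r × r` matrix `a` (in coordinates) for which `a * δ_λ` is the part of
`z` on and to the right of the diagonal `j = s - r + i`, as far as it is divisible by the powers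
of `X` in `δ_λ`. -/
noncomputable def upperFactor (n : ℕ) (hrs : r ≤ s) (lam : Fin r → ℕ) :
    (Fin r × Fin s × Fin (n + 1) → ℂ) →ₗ[ℂ] (Fin r × Fin r × Fin (n + 1) → ℂ) :=
  LinearMap.pi fun t => if h : t.1 ≤ t.2.1 ∧ (t.2.2 : ℕ) + lam t.2.1 < n + 1 then
    LinearMap.proj (t.1, diagCol hrs t.2.1, ⟨t.2.2 + lam t.2.1, h.2⟩) else 0

/-- The strictly lower triangular `s × s` matrix `b` (in coordinates) for which `δ_λ * b` is the
part of `z` to the left of the diagonal `j = s - r + i`, as far as it is divisible by the powers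
of `X` in `δ_λ`. -/
noncomputable def lowerFactor (n : ℕ) (hr : 1 ≤ r) (hrs : r ≤ s) (lam : Fin r → ℕ) :
    (Fin r × Fin s × Fin (n + 1) → ℂ) →ₗ[ℂ] (Fin s × Fin s × Fin (n + 1) → ℂ) :=
  LinearMap.pi fun t =>
    if h : t.2.1 < t.1 ∧ (t.2.2 : ℕ) + lam (diagRow hr hrs t.1) < n + 1 then
      LinearMap.proj (diagRow hr hrs t.1, t.2.1, ⟨t.2.2 + lam (diagRow hr hrs t.1), h.2⟩) else 0

theorem lowerFactor_apply (hr : 1 ≤ r) (hrs : r ≤ s) (lam : Fin r → ℕ)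
    (z : Fin r × Fin s × Fin (n + 1) → ℂ) (i j : Fin s) (l : Fin (n + 1)) :
    lowerFactor n hr hrs lam z (i, j, l) =
      if h : j < i ∧ (l : ℕ) + lam (diagRow hr hrs i) < n + 1 then
        z (diagRow hr hrs i, j, ⟨l + lam (diagRow hr hrs i), h.2⟩) else 0 := by
  simp only [lowerFactor, LinearMap.pi_apply]
  split_ifs <;> rfl

theorem rnCoeff_upperFactor_mul (hr : 1 ≤ r) (hrs : r ≤ s) (lam : Fin r → ℕ)
    (z : Fin r × Fin s × Fin (n + 1) → ℂ) (i : Fin r) (j : Fin s) (l : Fin (n + 1)) :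
    rnCoeff (((matCoord r r n).symm (upperFactor n hrs lam z) * deltaN r s n lam) i j) l =
      if s - r + (i : ℕ) ≤ (j : ℕ) ∧ minExp hr hrs lam i j ≤ (l : ℕ) then z (i, j, l) else 0 := by
  by_cases hj : (j : ℕ) < s - r
  · rw [mul_deltaN_apply_of_lt _ _ _ _ hj, if_neg (by omega), rnCoeff_zero]
  · obtain ⟨k, rfl⟩ : ∃ k, j = diagCol hrs k :=
      ⟨_, (diagCol_diagRow hr hrs j (not_lt.mp hj)).symm⟩
    rw [mul_deltaN_apply, rnCoeff_X_pow_mul, rnCoeff_symm]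
    simp only [upperFactor, LinearMap.pi_apply, minExp, diagRow_diagCol]
    have hd : ((diagCol hrs k : Fin s) : ℕ) = s - r + k := rfl
    have hl := l.2
    by_cases hik : i ≤ k
    · have hik' : (i : ℕ) ≤ k := hik
      rw [hd, if_neg (by omega : ¬ s - r + (k : ℕ) < s - r + i)]
      by_cases hkl : lam k ≤ (l : ℕ)
      · rw [if_pos hkl, dif_pos ⟨hik, by omega⟩, if_pos ⟨by omega, hkl⟩]
        simp [Nat.sub_add_cancel hkl]
      · rw [if_neg hkl, if_neg (by tauto)]
    · have hik' : ¬ (i : ℕ) ≤ k := hik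
      rw [dif_neg (by tauto), hd, if_neg (by omega : ¬ (s - r + (i : ℕ) ≤ s - r + k ∧ _))]
      simp

theorem rnCoeff_mul_lowerFactor (hr : 1 ≤ r) (hrs : r ≤ s) (lam : Fin r → ℕ)
    (z : Fin r × Fin s × Fin (n + 1) → ℂ) (i : Fin r) (j : Fin s) (l : Fin (n + 1)) :
    rnCoeff ((deltaN r s n lam * (matCoord s s n).symm (lowerFactor n hr hrs lam z)) i j) l =
      if (j : ℕ) < s - r + i ∧ minExp hr hrs lam i j ≤ (l : ℕ) then z (i, j, l) else 0 := by
  rw [deltaN_mul_apply hrs, rnCoeff_X_pow_mul, rnCoeff_symm, lowerFactor_apply]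
  simp only [diagRow_diagCol]
  have hd : (j < diagCol hrs i) ↔ (j : ℕ) < s - r + i := Iff.rfl
  have hl := l.2
  by_cases hji : (j : ℕ) < s - r + i
  · simp only [minExp_of_lt hr hrs lam hji, hd, hji, true_and]
    by_cases hil : lam i ≤ (l : ℕ)
    · simp [hil, Nat.sub_add_cancel hil, hl]
    · simp [hil]
  · simp [hd, hji]

/-- The map `y ↦ (1 + a(y)) * δ_λ * (1 + b(y))`, in coordinates, from the affine space indexed by
`ParamIdx`, where `a(y)` is upper triangular and `b(y)` is strictly lower triangular. -/
noncomputable def orbitParam (n : ℕ) (hr : 1 ≤ r) (hrs : r ≤ s) (lam : Fin r → ℕ)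
    (y : ParamIdx n hr hrs lam → ℂ) : Fin r × Fin s × Fin (n + 1) → ℂ :=
  mulCoord n (deltaN r s n lam)
    (matCoord r r n 1 + (upperFactor n hrs lam ∘ₗ paramExt n hr hrs lam) y)
    (matCoord s s n 1 + (lowerFactor n hr hrs lam ∘ₗ paramExt n hr hrs lam) y)

/-- Near the origin the parametrization has values in the orbit, since both outer factors stay
invertible there. -/
theorem eventually_orbitParam_mem (hr : 1 ≤ r) (hrs : r ≤ s) (lam : Fin r → ℕ) :
    ∀ᶠ y in 𝓝 (0 : ParamIdx n hr hrs lam → ℂ),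
      orbitParam n hr hrs lam y ∈
        {x | MatEquiv (matOfPointN r s n x) (deltaN r s n lam)} := by
  have key : ∀ {m : ℕ}
      (T : (ParamIdx n hr hrs lam → ℂ) →ₗ[ℂ] (Fin m × Fin m × Fin (n + 1) → ℂ)),
      ∀ᶠ y in 𝓝 (0 : ParamIdx n hr hrs lam → ℂ),
        IsUnit ((matCoord m m n).symm (matCoord m m n 1 + T y)) := by
    intro m T
    have hT : Continuous fun y => matCoord m m n 1 + T y :=
      continuous_const.add T.continuous_of_finiteDimensional
    have := hT.tendsto 0
    simp only [map_zero, add_zero] at this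
    exact this.eventually (eventually_isUnit m n)
  filter_upwards [key (upperFactor n hrs lam ∘ₗ paramExt n hr hrs lam),
    key (lowerFactor n hr hrs lam ∘ₗ paramExt n hr hrs lam)] with y hg hh
  obtain ⟨g, hg⟩ := hg
  obtain ⟨h, hh⟩ := hh
  refine ⟨g⁻¹, h⁻¹, ?_⟩
  rw [← matCoord_symm_apply, orbitParam, mulCoord_apply, LinearEquiv.symm_apply_apply, ← hg, ← hh]
  simp [Matrix.mul_assoc]

/-- The products `U * δ_λ * L` with `U` upper triangular and `L` lower unitriangular lie in the
image of `orbitParam`. -/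
theorem exists_orbitParam_eq (hr : 1 ≤ r) (hrs : r ≤ s) (lam : Fin r → ℕ)
    (U : Matrix (Fin r) (Fin r) (Rn n)) (L : Matrix (Fin s) (Fin s) (Rn n))
    (hU : ∀ i j, j < i → U i j = 0) (hL : ∀ i j, i < j → L i j = 0) (hL1 : ∀ i, L i i = 1) :
    ∃ y, orbitParam n hr hrs lam y = matCoord r s n (U * deltaN r s n lam * L) := by
  have hL' : ∀ i j, i ≤ j → (L - 1) i j = 0 := by
    intro i j hij
    rcases hij.eq_or_lt with rfl | hij
    · simp [hL1]
    · simp [hL i j hij, Matrix.one_apply_ne hij.ne]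
  have hU' : ∀ i j, j < i → (U - 1) i j = 0 := by
    intro i j hij
    simp [hU i j hij, Matrix.one_apply_ne hij.ne']
  set z := matCoord r s n ((U - 1) * deltaN r s n lam + deltaN r s n lam * (L - 1)) with hz
  have hzv : ∀ i j l, z (i, j, l) = rnCoeff (((U - 1) * deltaN r s n lam :
        Matrix (Fin r) (Fin s) (Rn n)) i j) l +
      rnCoeff (rnX n ^ lam i * (L - 1) (diagCol hrs i) j) l := by
    intro i j l
    rw [hz, matCoord_apply, Matrix.add_apply, rnCoeff_add, deltaN_mul_apply hrs]
  refine ⟨fun t => z t.1, ?_⟩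
  have hA : (matCoord r r n).symm (upperFactor n hrs lam (paramExt n hr hrs lam fun t => z t.1)) *
      deltaN r s n lam = (U - 1) * deltaN r s n lam := by
    ext i j
    refine rn_ext fun l => ?_
    rw [rnCoeff_upperFactor_mul hr, paramExt_restrict, hzv]
    by_cases hij : s - r + (i : ℕ) ≤ (j : ℕ)
    · obtain ⟨k, rfl⟩ : ∃ k, j = diagCol hrs k :=
        ⟨_, (diagCol_diagRow hr hrs j (by omega)).symm⟩
      have h1 : diagCol hrs i ≤ diagCol hrs k := hij
      simp only [hL' _ _ h1, mul_zero, rnCoeff_zero, add_zero, mul_deltaN_apply,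
        minExp_of_le hr hrs lam hij, diagRow_diagCol, rnCoeff_X_pow_mul, hij, true_and]
      split_ifs <;> rfl
    · rw [if_neg (by tauto)]
      by_cases hj : (j : ℕ) < s - r
      · rw [mul_deltaN_apply_of_lt _ _ _ _ hj, rnCoeff_zero]
      · obtain ⟨k, rfl⟩ : ∃ k, j = diagCol hrs k :=
          ⟨_, (diagCol_diagRow hr hrs j (by omega)).symm⟩
        have : k < i := by
          simp only [diagCol] at hij
          rw [Fin.lt_def]
          omega
        rw [mul_deltaN_apply, hU' _ _ this, mul_zero, rnCoeff_zero]
  have hC : deltaN r s n lam *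
      (matCoord s s n).symm (lowerFactor n hr hrs lam (paramExt n hr hrs lam fun t => z t.1)) =
      deltaN r s n lam * (L - 1) := by
    ext i j
    refine rn_ext fun l => ?_
    rw [rnCoeff_mul_lowerFactor hr, paramExt_restrict, hzv]
    by_cases hij : (j : ℕ) < s - r + (i : ℕ)
    · have h0 : ((U - 1) * deltaN r s n lam : Matrix (Fin r) (Fin s) (Rn n)) i j = 0 := by
        by_cases hj : (j : ℕ) < s - r
        · rw [mul_deltaN_apply_of_lt _ _ _ _ hj]
        · obtain ⟨k, rfl⟩ : ∃ k, j = diagCol hrs k :=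
            ⟨_, (diagCol_diagRow hr hrs j (by omega)).symm⟩
          have : k < i := by
            simp only [diagCol] at hij
            rw [Fin.lt_def]
            omega
          rw [mul_deltaN_apply, hU' _ _ this, mul_zero]
      simp only [h0, rnCoeff_zero, zero_add, minExp_of_lt hr hrs lam hij, rnCoeff_X_pow_mul, hij,
        true_and, deltaN_mul_apply hrs]
      split_ifs <;> rfl
    · rw [if_neg (by tauto), deltaN_mul_apply hrs, hL', mul_zero, rnCoeff_zero]
      exact not_lt.mp hij
  rw [orbitParam, mulCoord_apply, map_add, map_add, LinearEquiv.symm_apply_apply,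
    LinearEquiv.symm_apply_apply, LinearMap.comp_apply, LinearMap.comp_apply, Matrix.add_mul, hA,
    ← Matrix.add_mul, add_sub_cancel, Matrix.mul_assoc, Matrix.mul_add, hC, ← Matrix.mul_add,
    add_sub_cancel, Matrix.mul_assoc]

/-- Polynomials vanishing on the image of `orbitParam` vanish on all products `g * δ_λ * h`.
By density of Gauss decompositions take `g = U * L`; then `L` moves through `δ_λ` and is absorbed
in `h`. Again by density take `h = V * L₁`; then `V` moves through `δ_λ` and is absorbed in `U`. -/
theorem eval_eq_zero_of_orbitParam (hr : 1 ≤ r) (hrs : r ≤ s) (lam : Fin r → ℕ)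
    (hlam : Antitone lam) (p : MvPolynomial (Fin r × Fin s × Fin (n + 1)) ℂ)
    (hp : ∀ y, MvPolynomial.eval (orbitParam n hr hrs lam y) p = 0)
    (g : Matrix (Fin r) (Fin r) (Rn n)) (h : Matrix (Fin s) (Fin s) (Rn n)) :
    MvPolynomial.eval (matCoord r s n (g * deltaN r s n lam * h)) p = 0 := by
  have step : ∀ (U : Matrix (Fin r) (Fin r) (Rn n)) (h : Matrix (Fin s) (Fin s) (Rn n)),
      (∀ i j, j < i → U i j = 0) →
      MvPolynomial.eval (matCoord r s n (U * deltaN r s n lam * h)) p = 0 := by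
    intro U h hU
    obtain ⟨Φ, hΦ⟩ := exists_algHom_bilinear
      (mulCoord (a := r) (d := s) n (deltaN r s n lam)) 0 LinearMap.id (matCoord r r n U) 0
    simp only [LinearMap.zero_apply, add_zero, zero_add, LinearMap.id_apply, mulCoord_apply,
      LinearEquiv.symm_apply_apply] at hΦ
    have h0 : Φ p = 0 := by
      refine gauss_dominant s n _ fun V L hV hL hL1 => ?_
      obtain ⟨V', hV', hVV'⟩ := exists_upper_comm hr hrs lam hlam V hV
      have hUV : ∀ i j, j < i → (U * V') i j = 0 := by
        intro i j hij
        rw [Matrix.mul_apply]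
        refine Finset.sum_eq_zero fun k _ => ?_
        rcases lt_or_ge k i with hk | hk
        · rw [hU i k hk, zero_mul]
        · rw [hV' k j (hij.trans_le hk), mul_zero]
      obtain ⟨y, hy⟩ := exists_orbitParam_eq hr hrs lam (U * V') L hUV hL hL1
      rw [hΦ, LinearEquiv.symm_apply_apply, Matrix.mul_assoc U, ← Matrix.mul_assoc _ V, hVV',
        ← Matrix.mul_assoc, ← Matrix.mul_assoc, ← hy, hp]
    have := hΦ p (matCoord s s n h)
    rw [h0, map_zero, LinearEquiv.symm_apply_apply] at this
    exact this.symm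
  obtain ⟨Φ, hΦ⟩ := exists_algHom_bilinear
    (mulCoord (a := r) (d := s) n (deltaN r s n lam)) LinearMap.id 0 0 (matCoord s s n h)
  simp only [LinearMap.zero_apply, add_zero, zero_add, LinearMap.id_apply, mulCoord_apply,
    LinearEquiv.symm_apply_apply] at hΦ
  have h0 : Φ p = 0 := by
    refine gauss_dominant r n _ fun U L hU hL hL1 => ?_
    obtain ⟨L', hLL'⟩ := exists_lower_comm hr hrs lam hlam L hL
    rw [hΦ, LinearEquiv.symm_apply_apply, Matrix.mul_assoc U, hLL', ← Matrix.mul_assoc,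
      Matrix.mul_assoc _ L']
    exact step _ _ hU
  have := hΦ p (matCoord r r n g)
  rw [h0, map_zero, LinearEquiv.symm_apply_apply] at this
  exact this.symm

/-- The coordinates indexed by `ParamIdx` are algebraically independent on the orbit: composed with
`orbitParam` they give a map whose derivative at the origin is the identity. -/
theorem eq_zero_of_rename_mem (hr : 1 ≤ r) (hrs : r ≤ s) (lam : Fin r → ℕ)
    (p : MvPolynomial (ParamIdx n hr hrs lam) ℂ)
    (hp : MvPolynomial.rename Subtype.val p ∈
      vanIdeal {x | MatEquiv (matOfPointN r s n x) (deltaN r s n lam)}) : p = 0 := by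
  refine bilinear_dominant
    ((mulCoord n (deltaN r s n lam)).compr₂ (LinearMap.funLeft ℂ ℂ Subtype.val))
    (upperFactor n hrs lam ∘ₗ paramExt n hr hrs lam)
    (lowerFactor n hr hrs lam ∘ₗ paramExt n hr hrs lam)
    (matCoord r r n 1) (matCoord s s n 1) (fun z => ⟨z, ?_⟩) p ?_
  · ext ⟨⟨i, j, l⟩, ht⟩
    simp only [LinearMap.compr₂_apply, Pi.add_apply, LinearMap.funLeft_apply, mulCoord_apply,
      LinearEquiv.symm_apply_apply, matCoord_apply, Matrix.one_mul, Matrix.mul_one,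
      LinearMap.comp_apply, rnCoeff_upperFactor_mul hr, rnCoeff_mul_lowerFactor, paramExt_apply]
    simp only [ht, and_true, dite_true]
    by_cases hj : (j : ℕ) < s - r + i
    · rw [if_pos hj, if_neg (not_le.mpr hj), add_zero]
    · rw [if_neg hj, if_pos (not_lt.mp hj), zero_add]
  · filter_upwards [eventually_orbitParam_mem (n := n) hr hrs lam] with y hy
    have := hp _ hy
    rwa [MvPolynomial.eval_rename] at this

theorem sum_minExp (hr : 1 ≤ r) (hrs : r ≤ s) (lam : Fin r → ℕ) :
    ∑ i : Fin r, ∑ j : Fin s, minExp hr hrs lam i j =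
      ∑ i : Fin r, lam i * (s - r + 2 * (i : ℕ) + 1) := by
  -- Left of the diagonal, row `i` has `s - r + i` cells, each contributing `lam i`.
  have h1 : ∀ i : Fin r, ∑ j : Fin s, (if (j : ℕ) < s - r + i then lam i else 0) =
      lam i * (s - r + i) := by
    intro i
    rw [← Finset.sum_filter, Finset.sum_const, smul_eq_mul, mul_comm,
      Fin.card_filter_val_lt, min_eq_right (by omega)]
  -- On or right of the diagonal, column `diagCol k` has `k + 1` cells, each contributing `lam k`.
  have h2 : ∀ i : Fin r, ∑ j : Fin s,
      (if s - r + (i : ℕ) ≤ (j : ℕ) then lam (diagRow hr hrs j) else 0) =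
      ∑ k : Fin r, if i ≤ k then lam k else 0 := by
    intro i
    have hinj : Function.Injective (diagCol hrs) := fun k k' h => by
      rw [← diagRow_diagCol hr hrs k, h, diagRow_diagCol]
    refine (Finset.sum_of_injOn (diagCol hrs) hinj.injOn (by simp) ?_ ?_).symm
    · intro j _ hj
      refine if_neg fun hij => hj ?_
      exact ⟨diagRow hr hrs j, by simp, diagCol_diagRow hr hrs j (by omega)⟩
    · intro k _
      rw [diagRow_diagCol]
      exact if_congr (Nat.add_le_add_iff_left (n := s - r)).symm rfl rfl
  have h3 : ∀ k : Fin r, ∑ i : Fin r, (if i ≤ k then lam k else 0) = lam k * (k + 1) := by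
    intro k
    have hk : Finset.univ.filter (fun i : Fin r => i ≤ k) = Finset.Iic k := by
      ext i
      simp
    rw [← Finset.sum_filter, Finset.sum_const, smul_eq_mul, mul_comm, hk, Fin.card_Iic]
  have hsplit : ∀ (i : Fin r) (j : Fin s), minExp hr hrs lam i j =
      (if (j : ℕ) < s - r + i then lam i else 0) +
        if s - r + (i : ℕ) ≤ (j : ℕ) then lam (diagRow hr hrs j) else 0 := by
    intro i j
    by_cases h : (j : ℕ) < s - r + i
    · rw [minExp_of_lt hr hrs lam h, if_pos h, if_neg (not_le.mpr h), add_zero]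
    · rw [minExp_of_le hr hrs lam (not_lt.mp h), if_neg h, if_pos (not_lt.mp h), zero_add]
  simp_rw [hsplit, Finset.sum_add_distrib, h1, h2]
  rw [Finset.sum_comm (f := fun i k : Fin r => if i ≤ k then lam k else 0)]
  simp_rw [h3]
  rw [← Finset.sum_add_distrib]
  refine Finset.sum_congr rfl fun i _ => ?_
  ring

theorem card_paramIdx (hr : 1 ≤ r) (hrs : r ≤ s) (lam : Fin r → ℕ) (hn : ∀ i, lam i ≤ n) :
    Fintype.card (ParamIdx n hr hrs lam) =
      (n + 1) * (r * s) - ∑ i : Fin r, lam i * (s - r + 2 * (i : ℕ) + 1) := by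
  have hle : ∀ i j, minExp hr hrs lam i j ≤ n := by
    intro i j
    rw [minExp]
    split_ifs <;> exact hn _
  have hcount : ∀ m ≤ n, (∑ l : Fin (n + 1), if m ≤ (l : ℕ) then 1 else 0) + m = n + 1 := by
    intro m hm
    have h := Finset.card_filter_add_card_filter_not (s := (Finset.univ : Finset (Fin (n + 1))))
      (fun l => (l : ℕ) < m)
    rw [Fin.card_filter_val_lt, min_eq_right (by omega), Finset.card_univ, Fintype.card_fin] at h
    rw [← Finset.card_filter, add_comm]
    simpa using h
  have htot : Fintype.card (ParamIdx n hr hrs lam) +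
      ∑ i : Fin r, ∑ j : Fin s, minExp hr hrs lam i j = (n + 1) * (r * s) := by
    rw [Fintype.card_subtype, Finset.card_filter, Fintype.sum_prod_type,
      ← Finset.sum_add_distrib]
    simp_rw [Fintype.sum_prod_type, ← Finset.sum_add_distrib, hcount _ (hle _ _)]
    simp
    ring
  rw [← sum_minExp hr hrs lam]
  omega

end Orbit

/-- The Zariski closure of the orbit `O_λ^{(n)}` of `δ_λ^{(n)}` has codimension
`∑_{i=1}^r λ_i(s-r+2i-1)` in the affine space `ℂ^{(n+1)rs}`: the Krull dimension of the
quotient of the polynomial ring by the vanishing ideal of `O_λ^{(n)}` is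
`(n+1)rs - ∑_{i=1}^r λ_i(s-r+2i-1)`. -/
theorem stmt15 (r s n : ℕ) (hr : 1 ≤ r) (hrs : r ≤ s)
    (lam : Fin r → ℕ) (hlam : Antitone lam) (hn : ∀ i, lam i ≤ n) :
    ringKrullDim (MvPolynomial (Fin r × Fin s × Fin (n + 1)) ℂ ⧸
        vanIdeal {x | MatEquiv (matOfPointN r s n x) (deltaN r s n lam)})
      = ((n + 1) * (r * s) - ∑ i : Fin r, lam i * (s - r + 2 * (i : ℕ) + 1) : ℕ) := by
  set I := vanIdeal {x | MatEquiv (matOfPointN r s n x) (deltaN r s n lam)} with hI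
  obtain ⟨Φ, hΦ⟩ := exists_algHom_bilinear (mulCoord n (deltaN r s n lam))
    (upperFactor n hrs lam ∘ₗ paramExt n hr hrs lam)
    (lowerFactor n hr hrs lam ∘ₗ paramExt n hr hrs lam)
    (matCoord r r n 1) (matCoord s s n 1)
  have hker : ∀ p, Φ p = 0 ↔ p ∈ I := by
    intro p
    constructor
    · rintro h0 x ⟨g, h, hgh⟩
      have hx : matOfPointN r s n x = (g⁻¹).val * deltaN r s n lam * (h⁻¹).val := by
        rw [hgh]
        simp [Matrix.mul_assoc]
      rw [← (matCoord r s n).apply_symm_apply x, matCoord_symm_apply, hx]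
      refine eval_eq_zero_of_orbitParam hr hrs lam hlam p (fun y => ?_) _ _
      have := hΦ p y
      rw [h0, map_zero] at this
      exact this.symm
    · intro hp
      refine MvPolynomial.eq_zero_of_eventually_eval_eq_zero _ 0 ?_
      filter_upwards [eventually_orbitParam_mem (n := n) hr hrs lam] with y hy
      rw [hΦ]
      exact hp _ hy
  rw [← card_paramIdx hr hrs lam hn]
  refine ringKrullDim_eq_card_of_injective
    ((Ideal.Quotient.mkₐ ℂ I).comp (MvPolynomial.rename Subtype.val)) ?_
    (Ideal.Quotient.liftₐ I Φ fun p hp => (hker p).mpr hp) ?_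
  · rw [injective_iff_map_eq_zero]
    intro p hp
    exact eq_zero_of_rename_mem hr hrs lam p (Ideal.Quotient.eq_zero_iff_mem.mp hp)
  · rw [injective_iff_map_eq_zero]
    intro q hq
    obtain ⟨p, rfl⟩ := Ideal.Quotient.mk_surjective q
    exact Ideal.Quotient.eq_zero_iff_mem.mpr ((hker p).mp hq)
end
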